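/- arXiv:1809.07736 — 2 statements merged into one kernel-verified Lean document; each statement's English description precedes it below -/
import Mathlib

section
/- Suppose there exists a constant c > 0 such that for every positive integer k, every Hamiltonian graph G on n ≥ c·k^{11/5} vertices with independence number at most k, and every vertex set W of G with |W| ≤ 20k², G contains a cycle of length n−1 passing through all vertices of W. Then there exists a constant c' > 0 such that for every positive integer k, every Hamiltonian graph on n ≥ c'·k^{11/5} vertices with independence number at most k is pancyclic. -/
/-!
Deleting one vertex at a time from a Hamilton cycle, by applying the hypothesis to the graph induced
by the current cycle, yields every cycle length `ℓ` down to a threshold `m` of order `c k^(11/5)`.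
So only `ℓ < m` is left, with more than `2m + 42k²` vertices if `c'` is large compared to `c`.

*Medium lengths, `6k ≤ ℓ < m`.* Some cycle `C` of length `2m` leaves a set `B` of at least `18k²`
vertices uncovered. Splitting `B` along small vertex cuts must stop, since it adds up independence
numbers, so `B` contains a set `D` which stays connected after deleting any `5k` vertices. Two
disjoint links from `C` to `D` along the Hamilton cycle give a path through at least half of `C`
with both ends in `D` and interior outside `D`. A path can be shortened by less than `2k` at a time
without changing its ends, as among every other one of its first `2k + 2` vertices two are adjacent.
So it has a shortening of length just below `ℓ`, and `D` contains flexible paths, built from a chain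
of triangles, that make up for the exact difference.

*Short lengths, `ℓ < 6k`.* In a graph without `ℓ`-cycles, a layer `L` of a breadth-first search of
depth less than `ℓ / 2` satisfies `|L| ≤ (ℓ - 2) α(L)`: order `L` so that the descendants of every
vertex of the search tree are consecutive; a longer layer has a monotone path with `ℓ - 2` edges,
and a suitable part of it closes up through the search tree to an `ℓ`-cycle. As the layers
eventually stop growing quickly, some layer is large relative to its two neighbours. Removing these
three layers repeatedly bounds the number of vertices by a multiple of `k` times the independence
number.
-/

universe u

section Walks

variable {V : Type u} {G : SimpleGraph V} {a b c : V}

/-- `G` contains a cycle with exactly `ℓ` edges, equivalently `ℓ` vertices. -/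
def HasCycleOfLength (G : SimpleGraph V) (ℓ : ℕ) : Prop :=
  ∃ (u : V) (w : G.Walk u u), w.IsCycle ∧ w.length = ℓ

/-- A graph on `n` vertices is pancyclic if it has cycles of all lengths between `3` and `n`. -/
def IsPancyclic [Fintype V] (G : SimpleGraph V) : Prop :=
  ∀ ℓ, 3 ≤ ℓ → ℓ ≤ Fintype.card V → HasCycleOfLength G ℓ

theorem HasCycleOfLength.of_induce {S : Set V} {ℓ : ℕ} (h : HasCycleOfLength (G.induce S) ℓ) :
    HasCycleOfLength G ℓ := by
  obtain ⟨u, w, hw, hlen⟩ := h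
  let f := SimpleGraph.Embedding.induce (G := G) S
  exact ⟨f u, w.map f.toHom, hw.map f.injective, (w.length_map _).trans hlen⟩

theorem isPath_append {p : G.Walk a b} {q : G.Walk b c} (hp : p.IsPath) (hq : q.IsPath)
    (hpq : ∀ x ∈ p.support, x ∈ q.support → x = b) : (p.append q).IsPath := by
  have hb : b ∉ q.support.tail := by
    have := hq.support_nodup
    rw [← q.cons_tail_support, List.nodup_cons] at this
    exact this.1
  rw [SimpleGraph.Walk.isPath_def, SimpleGraph.Walk.support_append, List.nodup_append']
  refine ⟨hp.support_nodup, hq.support_nodup.tail, fun x hxp hxq ↦ hb ?_⟩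
  exact hpq x hxp (List.mem_of_mem_tail hxq) ▸ hxq

theorem hasCycleOfLength_of_isPath_of_isPath {p q : G.Walk a b} (hp : p.IsPath) (hq : q.IsPath)
    (hpq : ∀ x ∈ p.support, x ∈ q.support → x = a ∨ x = b) (hlen : 1 < p.length ∨ 1 < q.length) :
    HasCycleOfLength G (p.length + q.length) := by
  refine ⟨a, p.append q.reverse, hp.isCycle_append hq.reverse (fun x hxp hxq ↦ ?_) (by simpa),
    by simp⟩
  have hxa : x ≠ a := by
    have := hp.support_nodup
    rw [← p.cons_tail_support, List.nodup_cons] at this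
    exact ne_of_mem_of_not_mem hxp this.1
  have hxb : x ≠ b := by
    have := hq.reverse.support_nodup
    rw [← q.reverse.cons_tail_support, List.nodup_cons] at this
    exact ne_of_mem_of_not_mem hxq this.1
  have hxq' : x ∈ q.support := by simpa using List.mem_of_mem_tail hxq
  exact (hpq x (List.mem_of_mem_tail hxp) hxq').elim hxa hxb

theorem exists_isPath_getVert_getVert {p : G.Walk a b} (hp : p.IsPath) {s d : ℕ}
    (hsd : s + d ≤ p.length) :
    ∃ q : G.Walk (p.getVert s) (p.getVert (s + d)), q.IsPath ∧ q.length = d ∧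
      q.support ⊆ p.support := by
  rw [← p.drop_getVert s d]
  refine ⟨(p.drop s).take d, (hp.drop s).take d, ?_, fun x hx ↦ ?_⟩
  · rw [SimpleGraph.Walk.take_length, SimpleGraph.Walk.drop_length]
    lia
  · rw [SimpleGraph.Walk.support_take] at hx
    have hx := List.mem_of_mem_take hx
    rw [SimpleGraph.Walk.drop_support_eq_support_drop_min] at hx
    exact List.mem_of_mem_drop hx

theorem exists_isPath_of_preconnected_induce {S : Set V} (hS : (G.induce S).Preconnected)
    (ha : a ∈ S) (hb : b ∈ S) : ∃ p : G.Walk a b, p.IsPath ∧ ∀ x ∈ p.support, x ∈ S := by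
  obtain ⟨p, hp⟩ := (hS ⟨a, ha⟩ ⟨b, hb⟩).exists_isPath
  let f := SimpleGraph.Embedding.induce (G := G) S
  refine ⟨p.map f.toHom, hp.map f.injective, fun x hx ↦ ?_⟩
  obtain ⟨y, -, rfl⟩ := List.mem_map.mp (p.support_map f.toHom ▸ hx)
  exact y.2

end Walks

section IndepNum

variable {V : Type u} {G : SimpleGraph V}

theorem exists_isIndepSet_card_eq_indepNum_induce (G : SimpleGraph V) (S : Set V) :
    ∃ I : Finset V, (I : Set V) ⊆ S ∧ G.IsIndepSet I ∧ I.card = (G.induce S).indepNum := by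
  obtain ⟨I, hI⟩ := (G.induce S).exists_isNIndepSet_indepNum
  refine ⟨I.map (.subtype (· ∈ S)), by simp +contextual [Set.subset_def], ?_, by simp [hI.2]⟩
  intro x hx y hy hxy
  simp only [Finset.coe_map, Set.mem_image] at hx hy
  obtain ⟨x, hx, rfl⟩ := hx
  obtain ⟨y, hy, rfl⟩ := hy
  exact hI.1 hx hy fun h ↦ hxy (by rw [h])

variable [Finite V]

theorem card_le_indepNum_induce {S : Set V} {I : Finset V} (hI : G.IsIndepSet I)
    (hIS : (I : Set V) ⊆ S) : I.card ≤ (G.induce S).indepNum := by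
  classical
  have hcard : (I.subtype (· ∈ S)).card = I.card := by
    rw [Finset.card_subtype, Finset.filter_true_of_mem fun x hx ↦ hIS hx]
  rw [← hcard]
  refine SimpleGraph.IsIndepSet.card_le_indepNum fun x hx y hy hxy ↦ ?_
  exact hI (by simpa using hx) (by simpa using hy) (Subtype.coe_injective.ne hxy)

theorem indepNum_induce_le (G : SimpleGraph V) (S : Set V) :
    (G.induce S).indepNum ≤ G.indepNum := by
  obtain ⟨I, -, hI, hcard⟩ := exists_isIndepSet_card_eq_indepNum_induce G S
  exact hcard ▸ hI.card_le_indepNum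

theorem indepNum_induce_mono {S T : Set V} (hST : S ⊆ T) :
    (G.induce S).indepNum ≤ (G.induce T).indepNum := by
  obtain ⟨I, hIS, hI, hcard⟩ := exists_isIndepSet_card_eq_indepNum_induce G S
  exact hcard ▸ card_le_indepNum_induce hI (hIS.trans hST)

theorem indepNum_induce_add_le {S T U : Set V} (hSU : S ⊆ U) (hTU : T ⊆ U) (hST : Disjoint S T)
    (hadj : ∀ x ∈ S, ∀ y ∈ T, ¬ G.Adj x y) :
    (G.induce S).indepNum + (G.induce T).indepNum ≤ (G.induce U).indepNum := by
  classical
  obtain ⟨I, hIS, hI, hcardI⟩ := exists_isIndepSet_card_eq_indepNum_induce G S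
  obtain ⟨J, hJT, hJ, hcardJ⟩ := exists_isIndepSet_card_eq_indepNum_induce G T
  have hdisj : Disjoint I J := Finset.disjoint_coe.mp (hST.mono hIS hJT)
  rw [← hcardI, ← hcardJ, ← Finset.card_union_of_disjoint hdisj]
  refine card_le_indepNum_induce ?_ (by simpa using ⟨hIS.trans hSU, hJT.trans hTU⟩)
  rw [SimpleGraph.isIndepSet_iff, Finset.coe_union, Set.pairwise_union]
  exact ⟨hI, hJ, fun x hx y hy _ ↦ by
    simpa [G.adj_comm y] using hadj x (hIS hx) y (hJT hy)⟩

theorem indepNum_induce_pos {S : Set V} (hS : S.Nonempty) : 0 < (G.induce S).indepNum := by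
  obtain ⟨x, hx⟩ := hS
  simpa [Nat.pos_iff_ne_zero, Nat.one_le_iff_ne_zero] using
    card_le_indepNum_induce (G := G) (I := {x}) (by simp) (by simpa using hx)

theorem indepNum_pos [Nonempty V] (G : SimpleGraph V) : 0 < G.indepNum :=
  (indepNum_induce_pos Set.univ_nonempty).trans_le (indepNum_induce_le G Set.univ)

theorem indepNum_le_iff {k : ℕ} : G.indepNum ≤ k ↔
    ∀ s : Finset V, (∀ u ∈ s, ∀ v ∈ s, u ≠ v → ¬ G.Adj u v) → s.card ≤ k := by
  refine ⟨fun hk s hs ↦ ?_, fun h ↦ ?_⟩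
  · have hs' : G.IsIndepSet s := fun u hu v hv ↦ hs u hu v hv
    exact hs'.card_le_indepNum.trans hk
  · obtain ⟨s, hs⟩ := G.exists_isNIndepSet_indepNum
    exact hs.card_eq ▸ h s fun u hu v hv ↦ hs.isIndepSet hu hv

end IndepNum

section Shortening

variable {V : Type u} {G : SimpleGraph V} {a b : V} {p : G.Walk a b} {k s : ℕ}

theorem exists_isPath_of_adj_getVert (hp : p.IsPath) {i j : ℕ} (hij : i < j) (hj : j ≤ p.length)
    (hadj : G.Adj (p.getVert i) (p.getVert j)) :
    ∃ q : G.Walk a b, q.IsPath ∧ q.support ⊆ p.support ∧ q.length + j = p.length + i + 1 := by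
  let q := (p.take i).append (.cons hadj (p.drop j))
  have hq : q.support.Sublist p.support := by
    have hdrop : (p.support.drop j).Sublist (p.support.drop (i + 1)) :=
      List.drop_sublist_drop_left _ hij
    simpa [q, SimpleGraph.Walk.support_append, SimpleGraph.Walk.support_take,
      SimpleGraph.Walk.drop_support_eq_support_drop_min, hj] using
      (hdrop.append_left (p.support.take (i + 1)))
  refine ⟨q, .mk' (hq.nodup hp.support_nodup), hq.subset, ?_⟩
  simp only [q, SimpleGraph.Walk.length_append, SimpleGraph.Walk.length_cons,
    SimpleGraph.Walk.take_length, SimpleGraph.Walk.drop_length]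
  lia

variable [Finite V]

theorem exists_adj_getVert_of_indepNum_le (hp : p.IsPath) (hk : G.indepNum ≤ k)
    (hlen : 2 * k ≤ p.length) :
    ∃ i j, i < j ∧ j ≤ k ∧ G.Adj (p.getVert (2 * i)) (p.getVert (2 * j)) := by
  classical
  by_contra! hnadj
  have hinj : Set.InjOn (fun i ↦ p.getVert (2 * i)) (Finset.range (k + 1)) := by
    intro i hi j hj hij
    simp only [Finset.coe_range, Set.mem_Iio] at hi hj
    have := hp.getVert_injOn (show 2 * i ≤ p.length by lia) (show 2 * j ≤ p.length by lia) hij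
    lia
  have hindep : G.IsIndepSet ((Finset.range (k + 1)).image fun i ↦ p.getVert (2 * i)) := by
    rw [SimpleGraph.isIndepSet_iff, Finset.coe_image]
    rintro _ ⟨i, hi, rfl⟩ _ ⟨j, hj, rfl⟩ hne
    simp only [Finset.coe_range, Set.mem_Iio] at hi hj
    rcases lt_trichotomy i j with hij | rfl | hij
    · exact hnadj i j hij (by lia)
    · exact absurd rfl hne
    · exact fun h ↦ hnadj j i hij (by lia) h.symm
  have := hindep.card_le_indepNum
  rw [Finset.card_image_of_injOn hinj, Finset.card_range] at this
  lia

theorem exists_isPath_length_lt (hp : p.IsPath) (hk : G.indepNum ≤ k) (hlen : 2 * k ≤ p.length) :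
    ∃ q : G.Walk a b, q.IsPath ∧ q.support ⊆ p.support ∧
      q.length < p.length ∧ p.length < q.length + 2 * k := by
  obtain ⟨i, j, hij, hj, hadj⟩ := exists_adj_getVert_of_indepNum_le hp hk hlen
  obtain ⟨q, hq, hqp, hqlen⟩ :=
    exists_isPath_of_adj_getVert hp (Nat.mul_lt_mul_of_pos_left hij two_pos) (by lia) hadj
  exact ⟨q, hq, hqp, by lia, by lia⟩

theorem exists_isPath_length_near (hp : p.IsPath) (hk : G.indepNum ≤ k) (hks : 2 * k ≤ s)
    (hs : s ≤ p.length) :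
    ∃ q : G.Walk a b, q.IsPath ∧ q.support ⊆ p.support ∧
      q.length ≤ s ∧ s ≤ q.length + 2 * k := by
  induction hn : p.length using Nat.strong_induction_on generalizing p with
  | _ n ih =>
    subst hn
    rcases hs.eq_or_lt with rfl | hs
    · exact ⟨p, hp, List.Subset.refl _, le_rfl, by lia⟩
    obtain ⟨q, hq, hqp, hlt, hlen⟩ := exists_isPath_length_lt hp hk (hks.trans hs.le)
    rcases le_total s q.length with hsq | hqs
    · obtain ⟨r, hr, hrq, hrlen⟩ := ih q.length hlt hq hsq rfl
      exact ⟨r, hr, List.Subset.trans hrq hqp, hrlen⟩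
    · exact ⟨q, hq, hqp, hqs, by lia⟩

theorem exists_isPath_length_le (hp : p.IsPath) (hk : G.indepNum ≤ k) :
    ∃ q : G.Walk a b, q.IsPath ∧ q.support ⊆ p.support ∧ q.length ≤ 2 * k := by
  rcases le_total (2 * k) p.length with h | h
  · obtain ⟨q, hq, hqp, hlen, -⟩ := exists_isPath_length_near hp hk le_rfl h
    exact ⟨q, hq, hqp, hlen⟩
  · exact ⟨p, hp, List.Subset.refl _, h⟩

end Shortening

section Robust

variable {V : Type u} {G : SimpleGraph V}

/-- The subgraph of `G` induced by `D` stays connected whenever fewer than `κ` vertices are deleted.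
Unlike in the definition of `κ`-connectivity, nothing is required of the size of `D`. -/
def IsRobustlyConnected (G : SimpleGraph V) (κ : ℕ) (D : Finset V) : Prop :=
  ∀ X : Finset V, X.card < κ → (G.induce ((D : Set V) \ X)).Preconnected

theorem exists_partition_of_not_preconnected_induce [DecidableEq V] {S : Finset V}
    (hS : ¬ (G.induce (S : Set V)).Preconnected) :
    ∃ A B : Finset V, A.Nonempty ∧ B.Nonempty ∧ A ∪ B = S ∧ Disjoint A B ∧
      ∀ x ∈ A, ∀ y ∈ B, ¬ G.Adj x y := by
  classical
  simp only [SimpleGraph.Preconnected, not_forall] at hS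
  obtain ⟨a, b, hab⟩ := hS
  let P (x : V) : Prop := ∃ hx : x ∈ (S : Set V), (G.induce (S : Set V)).Reachable a ⟨x, hx⟩
  refine ⟨S.filter P, S.filter fun x ↦ ¬ P x, ⟨a, ?_⟩, ⟨b, ?_⟩, S.filter_union_filter_not_eq P,
    S.disjoint_filter_filter_not S P, fun x hx y hy hxy ↦ ?_⟩
  · exact Finset.mem_filter.mpr ⟨a.2, a.2, .refl _⟩
  · exact Finset.mem_filter.mpr ⟨b.2, fun ⟨_, h⟩ ↦ hab h⟩
  · obtain ⟨-, hxS, hax⟩ := Finset.mem_filter.mp hx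
    obtain ⟨hyS, hay⟩ := Finset.mem_filter.mp hy
    exact hay ⟨hyS, hax.trans (SimpleGraph.Adj.reachable (G := G.induce (S : Set V))
      (u := ⟨x, hxS⟩) (v := ⟨y, hyS⟩) hxy)⟩

theorem exists_isRobustlyConnected_subset [Finite V] {κ : ℕ} {S : Finset V} (hS : S.Nonempty)
    (hcard : κ * (3 * (G.induce (S : Set V)).indepNum) ≤ S.card + κ) :
    ∃ D ⊆ S, 2 * κ ≤ D.card ∧ IsRobustlyConnected G κ D := by
  classical
  induction hn : S.card using Nat.strong_induction_on generalizing S with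
  | _ n ih =>
    subst hn
    by_cases hrob : IsRobustlyConnected G κ S
    · have := indepNum_induce_pos (G := G) (Finset.coe_nonempty.mpr hS)
      exact ⟨S, subset_rfl, by nlinarith, hrob⟩
    simp only [IsRobustlyConnected, not_forall] at hrob
    obtain ⟨X, hX, hdisc⟩ := hrob
    rw [← Finset.coe_sdiff] at hdisc
    obtain ⟨A, B, hA, hB, hAB, hdisj, hadj⟩ := exists_partition_of_not_preconnected_induce hdisc
    have hAS : A ⊆ S := (Finset.subset_union_left.trans hAB.subset).trans Finset.sdiff_subset
    have hBS : B ⊆ S := (Finset.subset_union_right.trans hAB.subset).trans Finset.sdiff_subset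
    have hcardAB : A.card + B.card = (S \ X).card := by
      rw [← hAB, Finset.card_union_of_disjoint hdisj]
    have hcardS := Finset.le_card_sdiff X S
    have hcardS' : (S \ X).card ≤ S.card := Finset.card_le_card Finset.sdiff_subset
    have hindep := indepNum_induce_add_le (G := G) (Finset.coe_subset.mpr hAS)
      (Finset.coe_subset.mpr hBS) (Finset.disjoint_coe.mpr hdisj) hadj
    have hApos := hA.card_pos
    have hBpos := hB.card_pos
    by_cases hcardA : κ * (3 * (G.induce (A : Set V)).indepNum) ≤ A.card + κ
    · obtain ⟨D, hDA, hD⟩ := ih A.card (by lia) hA hcardA rfl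
      exact ⟨D, hDA.trans hAS, hD⟩
    · have hcardB : κ * (3 * (G.induce (B : Set V)).indepNum) ≤ B.card + κ := by
        have hmul := Nat.mul_le_mul_left κ (Nat.mul_le_mul_left 3 hindep)
        rw [mul_add, mul_add] at hmul
        lia
      obtain ⟨D, hDB, hD⟩ := ih B.card (by lia) hB hcardB rfl
      exact ⟨D, hDB.trans hBS, hD⟩

variable {κ k : ℕ} {D X : Finset V}

theorem IsRobustlyConnected.lt_card_neighbors [DecidableEq V] [DecidableRel G.Adj]
    (hD : IsRobustlyConnected G κ D) (hcard : 2 * κ ≤ D.card) {x : V} (hx : x ∈ D)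
    (hX : X.card + k < κ) : k < ((D \ X).filter (G.Adj x)).card := by
  by_contra! hle
  set N := (D \ X).filter (G.Adj x) with hN
  have hcardXN : ((X ∪ N).erase x).card ≤ X.card + N.card :=
    (Finset.card_erase_le).trans (Finset.card_union_le _ _)
  obtain ⟨y, hy, hyx⟩ : ∃ y ∈ D \ (X ∪ N).erase x, y ≠ x := by
    refine Finset.exists_mem_ne ?_ x
    have := Finset.le_card_sdiff ((X ∪ N).erase x) D
    lia
  have hpre := hD ((X ∪ N).erase x) (by lia)
  rw [← Finset.coe_sdiff] at hpre
  have : Nontrivial ↥((D \ (X ∪ N).erase x : Finset V) : Set V) :=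
    ⟨⟨⟨x, by simp [hx]⟩, ⟨y, hy⟩, by simpa using hyx.symm⟩⟩
  obtain ⟨z, hz⟩ := hpre.exists_adj_of_nontrivial ⟨x, by simp [hx]⟩
  have hxz : G.Adj x z := hz
  have hzX : (z : V) ∉ X ∪ N := fun h ↦
    (Finset.mem_sdiff.mp z.2).2 (Finset.mem_erase.mpr ⟨hxz.ne', h⟩)
  simp only [hN, Finset.mem_union, Finset.mem_filter, Finset.mem_sdiff, not_or] at hzX
  exact hzX.2 ⟨⟨(Finset.mem_sdiff.mp z.2).1, hzX.1⟩, hxz⟩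

variable [Finite V]

theorem IsRobustlyConnected.exists_triangle (hD : IsRobustlyConnected G κ D)
    (hcard : 2 * κ ≤ D.card) (hX : X.card + G.indepNum < κ) {x : V} (hx : x ∈ D) :
    ∃ a ∈ D, ∃ c ∈ D, a ∉ X ∧ c ∉ X ∧ G.Adj x a ∧ G.Adj x c ∧ G.Adj a c := by
  classical
  by_contra! hno
  have hindep : G.IsIndepSet ((D \ X).filter (G.Adj x)) := by
    intro a ha c hc _
    simp only [Finset.mem_coe, Finset.mem_filter, Finset.mem_sdiff] at ha hc
    exact hno a ha.1.1 c hc.1.1 ha.1.2 hc.1.2 ha.2 hc.2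
  exact (hD.lt_card_neighbors hcard hx hX).not_ge hindep.card_le_indepNum

theorem IsRobustlyConnected.exists_triangle_chain (hD : IsRobustlyConnected G κ D)
    (hcard : 2 * κ ≤ D.card) (j : ℕ) (hX : X.card + 2 * j + G.indepNum ≤ κ) {x : V}
    (hx : x ∈ D) (hxX : x ∉ X) :
    ∃ (z : V) (T : Finset V), T ⊆ D ∧ Disjoint T X ∧ T.card ≤ 2 * j + 1 ∧
      ∀ t, j ≤ t → t ≤ 2 * j →
        ∃ p : G.Walk x z, p.IsPath ∧ p.length = t ∧ ∀ v ∈ p.support, v ∈ T := by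
  classical
  induction j generalizing X x with
  | zero =>
    refine ⟨x, {x}, by simpa using hx, by simpa using hxX, by simp, fun t _ ht ↦ ⟨.nil, ?_⟩⟩
    simp_all
  | succ j ih =>
    obtain ⟨a, ha, c, hc, haX, hcX, hxa, hxc, hac⟩ :=
      hD.exists_triangle hcard (X := X) (by lia) hx
    obtain ⟨z, T, hTD, hTX, hTcard, hT⟩ := ih (X := insert x (insert a X))
      (by have := X.card_insert_le a; have := (insert a X).card_insert_le x; lia) hc
      (by simp [hcX, hxc.ne', hac.ne'])
    simp only [Finset.disjoint_insert_right] at hTX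
    obtain ⟨hxT, haT, hTX⟩ := hTX
    refine ⟨z, insert x (insert a T), ?_, ?_, ?_, fun t hjt htj ↦ ?_⟩
    · simp [Finset.insert_subset_iff, hx, ha, hTD]
    · simp [Finset.disjoint_insert_left, hxX, haX, hTX]
    · have := T.card_insert_le a
      have := (insert a T).card_insert_le x
      lia
    by_cases ht : t ≤ 2 * j + 1
    · obtain ⟨p, hp, hlen, hpT⟩ := hT (t - 1) (by lia) (by lia)
      refine ⟨.cons hxc p, hp.cons fun h ↦ hxT (hpT x h), ?_, ?_⟩
      · rw [SimpleGraph.Walk.length_cons]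
        lia
      · simp +contextual [hpT]
    · obtain ⟨p, hp, hlen, hpT⟩ := hT (t - 2) (by lia) (by lia)
      refine ⟨.cons hxa (.cons hac p), (hp.cons fun h ↦ haT (hpT a h)).cons ?_, ?_, ?_⟩
      · simpa [hxa.ne] using fun h ↦ hxT (hpT x h)
      · simp only [SimpleGraph.Walk.length_cons]
        lia
      · simp +contextual [hpT]

theorem IsRobustlyConnected.exists_flexible_path (hD : IsRobustlyConnected G κ D)
    (hcard : 2 * κ ≤ D.card) (hk : G.indepNum ≤ k) (hκ : 5 * k < κ) {x y : V} (hx : x ∈ D)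
    (hy : y ∈ D) (hxy : x ≠ y) :
    ∃ s ≤ 4 * k, ∀ t, s ≤ t → t ≤ s + 2 * k →
      ∃ p : G.Walk x y, p.IsPath ∧ p.length = t ∧ ∀ v ∈ p.support, v ∈ D := by
  classical
  obtain ⟨z, T, hTD, hTy, hTcard, hT⟩ :=
    hD.exists_triangle_chain hcard (X := {y}) (2 * k) (by rw [Finset.card_singleton]; lia) hx
      (by simpa using hxy)
  rw [Finset.disjoint_singleton_right] at hTy
  have hzT : z ∈ T := by
    obtain ⟨p, -, -, hp⟩ := hT (2 * k) le_rfl (by lia)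
    exact hp z p.end_mem_support
  have hTz : (T.erase z).card < κ := by
    rw [Finset.card_erase_of_mem hzT]
    lia
  obtain ⟨q, hq, hqD⟩ := exists_isPath_of_preconnected_induce (hD _ hTz) (a := z) (b := y)
    (by simp [hTD hzT]) (by simp [hy, hTy])
  obtain ⟨r, hr, hrq, hrlen⟩ := exists_isPath_length_le hq hk
  have hrD : ∀ v ∈ r.support, v ∈ D ∧ (v ∈ T → v = z) := fun v hv ↦ by
    simpa [not_imp_not, imp_iff_not_or, or_comm] using hqD v (hrq hv)
  refine ⟨2 * k + r.length, by lia, fun t hst hts ↦ ?_⟩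
  obtain ⟨p, hp, hplen, hpT⟩ := hT (t - r.length) (by lia) (by lia)
  refine ⟨p.append r, isPath_append hp hr fun v hvp hvr ↦ (hrD v hvr).2 (hpT v hvp), ?_, ?_⟩
  · rw [SimpleGraph.Walk.length_append]
    lia
  · intro v hv
    rcases (SimpleGraph.Walk.mem_support_append_iff _ _).mp hv with hv | hv
    · exact hTD (hpT v hv)
    · exact (hrD v hv).1

end Robust

section Links

variable {V : Type u} {G : SimpleGraph V} {A D S : Set V}

/-- `p` is a path from `A` to `D` that meets `A` and `D` only in its ends. -/
structure IsLink (A D : Set V) {a d : V} (p : G.Walk a d) : Prop where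
  isPath : p.IsPath
  start_mem : a ∈ A
  end_mem : d ∈ D
  eq_start : ∀ x ∈ p.support, x ∈ A → x = a
  eq_end : ∀ x ∈ p.support, x ∈ D → x = d

theorem exists_isLink_of_preconnected_induce (hS : (G.induce S).Preconnected)
    (hA : (A ∩ S).Nonempty) (hD : (D ∩ S).Nonempty) :
    ∃ (a d : V) (p : G.Walk a d), IsLink A D p ∧ ∀ x ∈ p.support, x ∈ S := by
  classical
  have hex : ∃ n, ∃ a ∈ A, ∃ d ∈ D, ∃ p : G.Walk a d,
      p.IsPath ∧ (∀ x ∈ p.support, x ∈ S) ∧ p.length = n := by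
    obtain ⟨a, haA, haS⟩ := hA
    obtain ⟨d, hdD, hdS⟩ := hD
    obtain ⟨p, hp, hpS⟩ := exists_isPath_of_preconnected_induce hS haS hdS
    exact ⟨_, a, haA, d, hdD, p, hp, hpS, rfl⟩
  obtain ⟨a, ha, d, hd, p, hp, hpS, hlen⟩ := Nat.find_spec hex
  refine ⟨a, d, p, ⟨hp, ha, hd, fun x hx hxA ↦ ?_, fun x hx hxD ↦ ?_⟩, hpS⟩ <;> by_contra hne
  · refine Nat.find_min hex (hlen ▸ p.length_dropUntil_lt_length hx hne) ⟨x, hxA, d, hd,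
      p.dropUntil x hx, hp.dropUntil hx, fun y hy ↦ hpS y ?_, rfl⟩
    exact p.support_dropUntil_subset_support hx hy
  · refine Nat.find_min hex (hlen ▸ p.length_takeUntil_lt_length hx hne) ⟨a, ha, x, hxD,
      p.takeUntil x hx, hp.takeUntil hx, fun y hy ↦ hpS y ?_, rfl⟩
    exact p.support_takeUntil_subset_support hx hy

theorem isCycle_append_comm {a b : V} {p : G.Walk a b} {q : G.Walk b a}
    (h : (p.append q).IsCycle) : (q.append p).IsCycle := by
  classical
  by_cases hp : p.Nil
  · cases p <;> simp_all
  by_cases hq : q.Nil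
  · cases q <;> simp_all
  refine (h.isPath_of_append_right hp).isCycle_append (h.isPath_of_append_left hq) ?_ ?_
  · have := h.support_nodup
    rw [SimpleGraph.Walk.tail_support_append, List.nodup_append'] at this
    exact this.2.2.symm
  · have := h.three_le_length
    rw [SimpleGraph.Walk.length_append] at this
    lia

theorem setOf_notMem_support_eq_of_isCycle_append {a b c : V} {q : G.Walk a b} {h : G.Adj b c}
    {r : G.Walk c a} (hqr : (q.append (.cons h r)).IsCycle)
    (hcov : ∀ x, x ∈ (q.append (.cons h r)).support) :
    {x | x ∉ q.support} = {x | x ∈ r.support.dropLast} := by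
  have hnodup := hqr.support_nodup
  rw [SimpleGraph.Walk.tail_support_append, SimpleGraph.Walk.support_cons, List.tail_cons,
    ← r.dropLast_support_concat, List.nodup_append'] at hnodup
  obtain ⟨-, hr, hdisj⟩ := hnodup
  ext x
  constructor
  · intro hx
    have hxr := hcov x
    rw [SimpleGraph.Walk.support_append, SimpleGraph.Walk.support_cons, List.tail_cons,
      ← r.dropLast_support_concat, List.mem_append, List.mem_append, List.mem_singleton] at hxr
    rcases hxr with hxq | hxr | rfl
    · exact absurd hxq hx
    · exact hxr
    · exact absurd q.start_mem_support hx
  · intro hx hxq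
    rw [← q.cons_tail_support, List.mem_cons] at hxq
    rcases hxq with rfl | hxq
    · exact (List.nodup_append'.mp hr).2.2 hx (List.mem_singleton_self _)
    · exact hdisj hxq (List.mem_append_left _ hx)

theorem preconnected_induce_setOf_notMem_support {a b : V} {q : G.Walk a b} {r : G.Walk b a}
    (hqr : (q.append r).IsCycle) (hcov : ∀ x, x ∈ (q.append r).support) :
    (G.induce {x | x ∉ q.support}).Preconnected := by
  cases r with
  | nil =>
    rw [SimpleGraph.Walk.append_nil] at hcov
    exact fun x ↦ absurd (hcov x) x.2
  | cons h r =>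
    rw [setOf_notMem_support_eq_of_isCycle_append hqr hcov]
    by_cases hr : r.Nil
    · cases r <;> simp_all [SimpleGraph.Preconnected]
    · rw [← r.support_dropLast hr]
      exact r.dropLast.connected_induce_support.preconnected

theorem exists_long_arc {v a b : V} {c : G.Walk v v} (hc : c.IsCycle) (ha : a ∈ c.support)
    (hb : b ∈ c.support) (hab : a ≠ b) :
    ∃ p : G.Walk a b, p.IsPath ∧ p.support ⊆ c.support ∧ c.length ≤ 2 * p.length := by
  classical
  have hb' : b ∈ (c.rotate a ha).support := by simpa using hb
  set p := (c.rotate a ha).takeUntil b hb'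
  set q := (c.rotate a ha).dropUntil b hb'
  have hpq : p.append q = c.rotate a ha := SimpleGraph.Walk.take_spec _ _
  have hcyc : (p.append q).IsCycle := by simpa [hpq] using hc
  have hlen : p.length + q.length = c.length := by
    rw [← SimpleGraph.Walk.length_append, hpq, SimpleGraph.Walk.length_rotate]
  have hsub : ∀ x, x ∈ p.support ∨ x ∈ q.support → x ∈ c.support := fun x hx ↦ by
    rw [← SimpleGraph.Walk.mem_support_append_iff, hpq] at hx
    simpa using hx
  rcases le_total p.length q.length with h | h
  · refine ⟨q.reverse, (hcyc.isPath_of_append_right ?_).reverse, fun x hx ↦ hsub x ?_, ?_⟩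
    · exact fun h ↦ hab h.eq
    · exact .inr (by simpa using hx)
    · rw [SimpleGraph.Walk.length_reverse]
      lia
  · exact ⟨p, hcyc.isPath_of_append_left fun h ↦ hab h.eq.symm, fun x hx ↦ hsub x (.inl hx),
      by lia⟩

variable [Finite V] [DecidableEq V]

theorem exists_isHamiltonianCycle_append_isLink {v : V} {c : G.Walk v v}
    (hc : c.IsHamiltonianCycle) (hAD : Disjoint A D) (hA : A.Nonempty) (hD : D.Nonempty) :
    ∃ (a d : V) (q : G.Walk a d) (r : G.Walk d a),
      (q.append r).IsHamiltonianCycle ∧ IsLink A D q := by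
  classical
  have := Fintype.ofFinite V
  simp only [SimpleGraph.Walk.isHamiltonianCycle_iff_isCycle_and_length_eq]
  have hex : ∃ n, ∃ a ∈ A, ∃ d ∈ D, ∃ (q : G.Walk a d) (r : G.Walk d a),
      ((q.append r).IsCycle ∧ (q.append r).length = Fintype.card V) ∧ q.length = n := by
    obtain ⟨a, ha⟩ := hA
    obtain ⟨d, hd⟩ := hD
    have hac := hc.mem_support a
    have hdc : d ∈ (c.rotate a hac).support := by simpa using hc.mem_support d
    rw [SimpleGraph.Walk.isHamiltonianCycle_iff_isCycle_and_length_eq] at hc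
    exact ⟨_, a, ha, d, hd, (c.rotate a hac).takeUntil d hdc, (c.rotate a hac).dropUntil d hdc,
      by rw [SimpleGraph.Walk.take_spec]; simpa using hc, rfl⟩
  obtain ⟨a, ha, d, hd, q, r, ⟨hqr, hlen⟩, hmin⟩ := Nat.find_spec hex
  have hr : ¬ r.Nil := fun h ↦ hAD.ne_of_mem ha hd h.eq.symm
  refine ⟨a, d, q, r, ⟨hqr, hlen⟩, hqr.isPath_of_append_left hr, ha, hd, fun x hx hxA ↦ ?_,
    fun x hx hxD ↦ ?_⟩ <;> by_contra hne <;>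
    rw [← q.take_spec hx] at hqr hlen
  · refine Nat.find_min hex (hmin ▸ q.length_dropUntil_lt_length hx hne) ⟨x, hxA, d, hd,
      q.dropUntil x hx, r.append (q.takeUntil x hx), ⟨?_, ?_⟩, rfl⟩
    · rw [SimpleGraph.Walk.append_assoc]
      rw [← SimpleGraph.Walk.append_assoc] at hqr
      exact isCycle_append_comm hqr
    · simp only [SimpleGraph.Walk.length_append] at hlen ⊢
      lia
  · refine Nat.find_min hex (hmin ▸ q.length_takeUntil_lt_length hx hne) ⟨a, ha, x, hxD,
      q.takeUntil x hx, (q.dropUntil x hx).append r, ?_, rfl⟩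
    rw [SimpleGraph.Walk.append_assoc]
    exact ⟨hqr, hlen⟩

theorem exists_disjoint_isLink {v : V} {c : G.Walk v v} (hc : c.IsHamiltonianCycle)
    (hAD : Disjoint A D) (hA : A.Nontrivial) (hD : D.Nontrivial) :
    ∃ (a d a' d' : V) (q : G.Walk a d) (q' : G.Walk a' d'), IsLink A D q ∧ IsLink A D q' ∧
      q.support.Disjoint q'.support := by
  obtain ⟨a, d, q, r, hqr, hq⟩ :=
    exists_isHamiltonianCycle_append_isLink hc hAD hA.nonempty hD.nonempty
  obtain ⟨a', ha', haa'⟩ := hA.exists_ne a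
  obtain ⟨d', hd', hdd'⟩ := hD.exists_ne d
  obtain ⟨a', d', q', hq', hdisj⟩ := exists_isLink_of_preconnected_induce
    (preconnected_induce_setOf_notMem_support hqr.isCycle hqr.mem_support)
    ⟨a', ha', fun h ↦ haa' (hq.eq_start a' h ha')⟩ ⟨d', hd', fun h ↦ hdd' (hq.eq_end d' h hd')⟩
  exact ⟨a, d, a', d', q, q', hq, hq', fun x hx hx' ↦ hdisj x hx' hx⟩

theorem exists_long_isLink {v w : V} {c : G.Walk v v} {h : G.Walk w w}
    (hh : h.IsHamiltonianCycle) (hc : c.IsCycle) (hcD : ∀ x ∈ c.support, x ∉ D)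
    (hD : D.Nontrivial) :
    ∃ d ∈ D, ∃ d' ∈ D, d ≠ d' ∧ ∃ p : G.Walk d d', p.IsPath ∧
      (∀ x ∈ p.support, x ∈ D → x = d ∨ x = d') ∧ c.length ≤ 2 * p.length := by
  have hA : {x | x ∈ c.support}.Nontrivial :=
    ⟨v, c.start_mem_support, c.snd, c.getVert_mem_support 1, (c.adj_snd hc.not_nil).ne⟩
  obtain ⟨a, d, a', d', q, q', hq, hq', hdisj⟩ :=
    exists_disjoint_isLink hh (Set.disjoint_left.mpr hcD) hA hD
  obtain ⟨r, hr, hrc, hlen⟩ := exists_long_arc hc hq.start_mem hq'.start_mem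
    fun h ↦ hdisj q.start_mem_support (h ▸ q'.start_mem_support)
  have hqr : (q.reverse.append r).IsPath := isPath_append hq.isPath.reverse hr fun x hxq hxr ↦
    hq.eq_start x (by simpa using hxq) (hrc hxr)
  have hqr_support : ∀ x ∈ (q.reverse.append r).support, x ∈ q.support ∨ x ∈ r.support := by simp
  have hp : ((q.reverse.append r).append q').IsPath := isPath_append hqr hq'.isPath fun x hx hxq' ↦
    (hqr_support x hx).elim (fun hxq ↦ absurd hxq' (hdisj hxq))
      fun hxr ↦ hq'.eq_start x hxq' (hrc hxr)
  refine ⟨d, hq.end_mem, d', hq'.end_mem,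
    fun h ↦ hdisj q.end_mem_support (h ▸ q'.end_mem_support), _, hp, fun x hx hxD ↦ ?_, ?_⟩
  · rcases (SimpleGraph.Walk.mem_support_append_iff _ _).mp hx with hx | hx
    · rcases hqr_support x hx with hx | hx
      · exact .inl (hq.eq_end x hx hxD)
      · exact absurd hxD (hcD x (hrc hx))
    · exact .inr (hq'.eq_end x hx hxD)
  · simp only [SimpleGraph.Walk.length_append]
    lia

theorem hasCycleOfLength_of_isRobustlyConnected {v w : V} {c : G.Walk v v} {h : G.Walk w w}
    (hh : h.IsHamiltonianCycle) (hc : c.IsCycle) {D : Finset V} (hcD : ∀ x ∈ c.support, x ∉ D)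
    {k κ ℓ : ℕ} (hk : G.indepNum ≤ k) (hD : IsRobustlyConnected G κ D) (hcard : 2 * κ ≤ D.card)
    (hκ : 5 * k < κ) (hℓ : 6 * k ≤ ℓ) (hℓc : 2 * ℓ ≤ c.length) :
    HasCycleOfLength G ℓ := by
  have hkpos : 0 < k := have : Nonempty V := ⟨v⟩; (indepNum_pos G).trans_le hk
  obtain ⟨d, hd, d', hd', hne, p, hp, hpD, hplen⟩ :=
    exists_long_isLink hh hc (D := (D : Set V)) hcD (Finset.one_lt_card_iff_nontrivial.mp (by lia))
  obtain ⟨s, hs, hflex⟩ := hD.exists_flexible_path hcard hk hκ hd hd' hne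
  obtain ⟨q, hq, hqp, hqlen, hqlen'⟩ :=
    exists_isPath_length_near hp hk (s := ℓ - s) (by lia) (by lia)
  obtain ⟨r, hr, hrlen, hrD⟩ := hflex (ℓ - q.length) (by lia) (by lia)
  have hlen : q.length + r.length = ℓ := by lia
  exact hlen ▸ hasCycleOfLength_of_isPath_of_isPath hq hr
    (fun x hxq hxr ↦ hpD x (hqp hxq) (hrD x hxr)) (by lia)

theorem hasCycleOfLength_of_disjoint_isCycle {v w : V} {c : G.Walk v v} {h : G.Walk w w}
    (hh : h.IsHamiltonianCycle) (hc : c.IsCycle) {B : Finset V} (hcB : ∀ x ∈ c.support, x ∉ B)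
    {k ℓ : ℕ} (hk : G.indepNum ≤ k) (hB : 18 * k ^ 2 ≤ B.card) (hℓ : 6 * k ≤ ℓ)
    (hℓc : 2 * ℓ ≤ c.length) :
    HasCycleOfLength G ℓ := by
  have hkpos : 0 < k := have : Nonempty V := ⟨v⟩; (indepNum_pos G).trans_le hk
  obtain ⟨D, hDB, hcard, hD⟩ := exists_isRobustlyConnected_subset (G := G) (κ := 6 * k) (S := B)
    (Finset.card_pos.mp (by nlinarith)) (by
      have := Nat.mul_le_mul_left (18 * k) ((indepNum_induce_le G B).trans hk)
      nlinarith)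
  exact hasCycleOfLength_of_isRobustlyConnected hh hc (fun x hx hxD ↦ hcB x hx (hDB hxD)) hk hD
    hcard (by lia) hℓ hℓc

end Links

section Orders

variable {V : Type u}

theorem exists_increasing_walk [Finite V] [LinearOrder V] {G : SimpleGraph V} (m : ℕ)
    {T : Finset V} (hT : m * (G.induce (T : Set V)).indepNum < T.card) :
    ∃ (a b : V) (p : G.Walk a b), p.length = m ∧ (∀ x ∈ p.support, x ∈ T) ∧
      StrictMonoOn p.getVert (Set.Iic m) := by
  induction m generalizing T with
  | zero =>
    obtain ⟨a, ha⟩ := Finset.card_pos.mp ((Nat.zero_le _).trans_lt hT)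
    exact ⟨a, a, .nil, rfl, by simpa using ha, by simp [StrictMonoOn]⟩
  | succ m ih =>
    classical
    let M := T.filter fun x ↦ ∀ y ∈ T, G.Adj x y → x < y
    have hM : G.IsIndepSet M := by
      intro x hx y hy _ hxy
      obtain ⟨hxT, hx⟩ := Finset.mem_filter.mp hx
      obtain ⟨hyT, hy⟩ := Finset.mem_filter.mp hy
      exact (hx y hyT hxy).asymm (hy x hxT hxy.symm)
    have hMT : M.card ≤ (G.induce (T : Set V)).indepNum :=
      card_le_indepNum_induce hM (Finset.coe_subset.mpr (Finset.filter_subset _ _))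
    have hcard : m * (G.induce ((T \ M : Finset V) : Set V)).indepNum < (T \ M).card := by
      have hle : m * (G.induce ((T \ M : Finset V) : Set V)).indepNum ≤
          m * (G.induce (T : Set V)).indepNum :=
        Nat.mul_le_mul_left _
          (indepNum_induce_mono (Finset.coe_subset.mpr Finset.sdiff_subset))
      have := Finset.le_card_sdiff M T
      rw [Nat.succ_mul] at hT
      lia
    obtain ⟨a, b, p, hlen, hpT, hmono⟩ := ih hcard
    obtain ⟨haT, haM⟩ := Finset.mem_sdiff.mp (hpT a p.start_mem_support)
    obtain ⟨y, hyT, hay, hya⟩ : ∃ y ∈ T, G.Adj a y ∧ y ≤ a := by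
      simpa [M, haT] using haM
    refine ⟨y, b, .cons hay.symm p, by simp [hlen], ?_, ?_⟩
    · simpa [hyT] using fun x hx ↦ (Finset.mem_sdiff.mp (hpT x hx)).1
    · refine strictMonoOn_Iic_of_lt_succ ?_
      rintro (_ | i) hi
      · simpa [Order.succ_eq_add_one, SimpleGraph.Walk.getVert_cons] using hya.lt_of_ne hay.ne'
      · simpa using hmono (a := i) (b := i + 1) (by simp; lia) (by simp; lia) (by lia)

theorem exists_linearOrder_fibre_convex (f : V → V) (n : ℕ) :
    ∃ _ : LinearOrder V, ∀ h ≤ n, ∀ x y z : V, x ≤ y → y ≤ z → f^[h] x = f^[h] z →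
      f^[h] y = f^[h] x := by
  induction n with
  | zero =>
    classical
    let _ : LinearOrder V := linearOrderOfSTO WellOrderingRel
    refine ⟨inferInstance, fun h hh x y z hxy hyz hxz ↦ ?_⟩
    obtain rfl : h = 0 := by lia
    simp only [Function.iterate_zero, id_eq] at hxz ⊢
    exact le_antisymm (hxz ▸ hyz) hxy
  | succ n ih =>
    obtain ⟨_, ih⟩ := ih
    let key (x : V) : V ×ₗ V := toLex (f x, x)
    have hkey : Function.Injective key := fun x y hxy ↦ congrArg (fun p ↦ (ofLex p).2) hxy
    have hmono {x y : V} (hxy : key x ≤ key y) : f x ≤ f y := (Prod.Lex.le_iff'.mp hxy).1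
    refine ⟨LinearOrder.lift' key hkey, fun h hh x y z hxy hyz hxz ↦ ?_⟩
    cases h with
    | zero =>
      simp only [Function.iterate_zero, id_eq] at hxz ⊢
      exact hkey (le_antisymm (hxz ▸ hyz) hxy)
    | succ h => exact ih h (by lia) (f x) (f y) (f z) (hmono hxy) (hmono hyz) hxz

end Orders

theorem exists_window {P : ℕ → Prop} {m d : ℕ} (h0 : P 0) (hm : ¬ P m)
    (hP : ∀ s t, s ≤ t → t ≤ m → P t → P s) (hd : 0 < d) (hdm : d ≤ m) :
    ∃ s, s + d ≤ m ∧ P s ∧ ¬ P (s + d) := by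
  classical
  have hex : ∃ j, ¬ P j := ⟨m, hm⟩
  have hj0 : 0 < Nat.find hex := by simpa using h0
  have hjm : Nat.find hex ≤ m := Nat.find_min' hex hm
  refine ⟨min (Nat.find hex - 1) (m - d), by lia, ?_, fun h ↦ Nat.find_spec hex ?_⟩
  · exact not_not.mp (Nat.find_min hex (by lia))
  · exact hP _ _ (by lia) (by lia) h

theorem exists_slow_growth {a : ℕ → ℕ} {g x : ℕ} (h0 : 0 < a 0) (hg : 0 < g) (hx : a x < g ^ x) :
    ∃ i < x, 0 < a i ∧ a (i - 1) ≤ a i ∧ a (i + 1) ≤ g * a i := by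
  have hex : ∃ i, i < x ∧ a (i + 1) ≤ g * a i := by
    by_contra! hno
    have hpow : ∀ j ≤ x, g ^ j ≤ a j := by
      intro j
      induction j with
      | zero => simpa [Nat.one_le_iff_ne_zero] using h0.ne'
      | succ j ih =>
        intro hj
        have := hno j hj
        have := Nat.mul_le_mul_left g (ih (by lia))
        rw [pow_succ']
        lia
    exact (hpow x le_rfl).not_gt hx
  obtain ⟨hi, hslow⟩ := Nat.find_spec hex
  refine ⟨Nat.find hex, hi, ?_⟩
  rcases hfind : Nat.find hex with _ | j
  · rw [hfind] at hslow
    exact ⟨h0, le_rfl, hslow⟩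
  · rw [hfind] at hslow hi
    have hfast : g * a j < a (j + 1) := by
      have := Nat.find_min hex (m := j) (by lia)
      grind
    have := Nat.le_mul_of_pos_left (a j) hg
    exact ⟨by lia, by simp only [Nat.add_sub_cancel]; lia, hslow⟩

section Layers

variable {V : Type u} {G : SimpleGraph V} {v : V} {f : V → V}

/-- `f` maps every vertex `w ≠ v` in the component of `v` to its parent in a breadth-first search
tree with root `v`. -/
def IsParentFunction (G : SimpleGraph V) (v : V) (f : V → V) : Prop :=
  ∀ ⦃w : V⦄ ⦃j : ℕ⦄, G.edist v w = (j + 1 : ℕ) → G.edist v (f w) = j ∧ G.Adj w (f w)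

theorem exists_edist_eq_of_adj {u w : V} {i : ℕ} (hu : G.edist v u = i) (huw : G.Adj u w) :
    ∃ j : ℕ, G.edist v w = j ∧ j ≤ i + 1 ∧ i ≤ j + 1 := by
  have hw : G.edist v w ≤ (i + 1 : ℕ) := by
    rw [Nat.cast_succ, ← hu, ← SimpleGraph.edist_eq_one_iff_adj.mpr huw]
    exact SimpleGraph.edist_triangle
  obtain ⟨j, hj, hji⟩ := ENat.le_natCast_iff.mp hw
  have hi : (i : ℕ∞) ≤ (j + 1 : ℕ) := by
    rw [Nat.cast_succ, ← hj, ← hu, ← SimpleGraph.edist_eq_one_iff_adj.mpr huw.symm]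
    exact SimpleGraph.edist_triangle
  exact ⟨j, hj, hji, Nat.cast_le.mp hi⟩

theorem exists_isParentFunction (G : SimpleGraph V) (v : V) : ∃ f, IsParentFunction G v f := by
  have hex (w : V) : ∃ x, ∀ j : ℕ, G.edist v w = (j + 1 : ℕ) → G.edist v x = j ∧ G.Adj w x := by
    by_cases hw : ∃ j : ℕ, G.edist v w = (j + 1 : ℕ)
    swap
    · exact ⟨v, fun j hj ↦ absurd ⟨j, hj⟩ hw⟩
    obtain ⟨j, hj⟩ := hw
    obtain ⟨p, hp⟩ := SimpleGraph.exists_walk_of_edist_eq_coe (SimpleGraph.edist_comm ▸ hj)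
    cases p with
    | nil => simp at hp
    | @cons _ x _ hwx q =>
      have hq : q.length = j := by simpa using hp
      refine ⟨x, fun j' hj' ↦ ?_⟩
      obtain rfl : j = j' := by simpa using hj.symm.trans hj'
      obtain ⟨i, hi, -, hji⟩ := exists_edist_eq_of_adj hj hwx
      have hij : (i : ℕ∞) ≤ j := by
        rw [← hi, ← hq, SimpleGraph.edist_comm]
        exact q.edist_le
      obtain rfl : j = i := le_antisymm (Nat.succ_le_succ_iff.mp hji) (Nat.cast_le.mp hij)
      exact ⟨hi, hwx⟩
  choose f hf using hex
  exact ⟨f, hf⟩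

theorem IsParentFunction.edist_iterate (hf : IsParentFunction G v f) {w : V} {h j : ℕ}
    (hw : G.edist v w = (j + h : ℕ)) : G.edist v (f^[h] w) = j := by
  induction h generalizing w with
  | zero => simpa using hw
  | succ h ih => exact ih (hf hw).1

theorem IsParentFunction.exists_isPath_iterate (hf : IsParentFunction G v f) {w z : V} {h j : ℕ}
    (hw : G.edist v w = (j + h : ℕ)) (hz : f^[h] w = z) :
    ∃ p : G.Walk w z, p.IsPath ∧ p.length = h ∧ ∀ x ∈ p.support, ∃ a ≤ h, x = f^[a] w := by
  induction h generalizing w with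
  | zero =>
    obtain rfl : w = z := hz
    exact ⟨.nil, by simp⟩
  | succ h ih =>
    obtain ⟨p, hp, hlen, hsup⟩ := ih (hf hw).1 hz
    refine ⟨.cons (hf hw).2 p, hp.cons fun hwp ↦ ?_, by simp [hlen], fun x hx ↦ ?_⟩
    · obtain ⟨a, ha, hwa⟩ := hsup w hwp
      have hdist := hf.edist_iterate (w := w) (h := a + 1) (j := j + h - a)
        (by rw [hw]; congr 1; lia)
      rw [Function.iterate_succ_apply, ← hwa, hw, Nat.cast_inj] at hdist
      lia
    · rw [SimpleGraph.Walk.support_cons, List.mem_cons] at hx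
      rcases hx with rfl | hx
      · exact ⟨0, by lia, rfl⟩
      · obtain ⟨a, ha, rfl⟩ := hsup x hx
        exact ⟨a + 1, by lia, rfl⟩

theorem IsParentFunction.exists_isPath_of_iterate_eq (hf : IsParentFunction G v f) {x y : V}
    {h j : ℕ} (hx : G.edist v x = (j + (h + 1) : ℕ)) (hy : G.edist v y = (j + (h + 1) : ℕ))
    (hne : f^[h] x ≠ f^[h] y) (heq : f^[h + 1] x = f^[h + 1] y) :
    ∃ p : G.Walk x y, p.IsPath ∧ p.length = 2 * (h + 1) ∧
      ∀ z ∈ p.support, G.edist v z = (j + (h + 1) : ℕ) → z = x ∨ z = y := by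
  have hdist {w : V} {a : ℕ} (hw : G.edist v w = (j + (h + 1) : ℕ)) (ha : a ≤ h + 1) :
      G.edist v (f^[a] w) = (j + (h + 1) - a : ℕ) :=
    hf.edist_iterate (by rw [hw]; congr 1; lia)
  have htop {w z : V} {a : ℕ} (hw : G.edist v w = (j + (h + 1) : ℕ)) (ha : a ≤ h + 1)
      (hz : G.edist v z = (j + (h + 1) : ℕ)) (hza : z = f^[a] w) : z = w := by
    rw [hza, hdist hw ha, Nat.cast_inj] at hz
    obtain rfl : a = 0 := by lia
    exact hza
  obtain ⟨r, hr⟩ : ∃ r, f^[h + 1] x = r := ⟨_, rfl⟩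
  obtain ⟨p, hp, hplen, hpsup⟩ := hf.exists_isPath_iterate hx hr
  obtain ⟨q, hq, hqlen, hqsup⟩ := hf.exists_isPath_iterate hy (heq.symm.trans hr)
  refine ⟨p.append q.reverse, isPath_append hp hq.reverse fun z hzp hzq ↦ ?_,
    by simp only [SimpleGraph.Walk.length_append, SimpleGraph.Walk.length_reverse]; lia,
    fun z hz hzdist ↦ ?_⟩
  · obtain ⟨a, ha, rfl⟩ := hpsup z hzp
    obtain ⟨b, hb, hab⟩ := hqsup _ (by simpa using hzq)
    have hdab := hdist hx ha
    rw [hab, hdist hy hb, Nat.cast_inj] at hdab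
    obtain rfl : a = b := by lia
    rcases ha.eq_or_lt with rfl | ha
    · exact hr
    · refine absurd ?_ hne
      rw [← Nat.sub_add_cancel (Nat.lt_succ_iff.mp ha), Function.iterate_add_apply, hab,
        ← Function.iterate_add_apply]
  · rcases (SimpleGraph.Walk.mem_support_append_iff _ _).mp hz with hz | hz
    · obtain ⟨a, ha, hza⟩ := hpsup z hz
      exact .inl (htop hx ha hzdist hza)
    · obtain ⟨a, ha, hza⟩ := hqsup z (by simpa using hz)
      exact .inr (htop hy ha hzdist hza)

theorem IsParentFunction.exists_iterate_ne_iterate_succ_eq (hf : IsParentFunction G v f) {x y : V}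
    {i : ℕ} (hx : G.edist v x = i) (hy : G.edist v y = i) (hxy : x ≠ y) :
    ∃ h < i, f^[h] x ≠ f^[h] y ∧ f^[h + 1] x = f^[h + 1] y := by
  classical
  have hroot {w : V} (hw : G.edist v w = i) : f^[i] w = v := by
    have hdist : G.edist v (f^[i] w) = 0 := hf.edist_iterate (j := 0) (by simpa using hw)
    exact (SimpleGraph.edist_eq_zero_iff.mp hdist).symm
  have hi : f^[i] x = f^[i] y := by rw [hroot hx, hroot hy]
  have hex : ∃ H, f^[H] x = f^[H] y := ⟨i, hi⟩
  obtain ⟨h, hh⟩ := Nat.exists_eq_succ_of_ne_zero (n := Nat.find hex) fun h0 ↦ hxy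
    ((Nat.find_eq_zero hex).mp h0)
  have hle : Nat.find hex ≤ i := Nat.find_min' hex hi
  have hspec := Nat.find_spec hex
  rw [hh] at hspec
  exact ⟨h, by lia, Nat.find_min hex (by lia), hspec⟩

theorem IsParentFunction.hasCycleOfLength_of_strictMonoOn [LinearOrder V]
    (hf : IsParentFunction G v f) {i ℓ : ℕ}
    (hconvex : ∀ h ≤ i, ∀ x y z : V, x ≤ y → y ≤ z → f^[h] x = f^[h] z → f^[h] y = f^[h] x)
    (hℓ : 3 ≤ ℓ) (hiℓ : 2 * i + 1 ≤ ℓ) {a b : V} {p : G.Walk a b} (hlen : p.length = ℓ - 2)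
    (hpi : ∀ w ∈ p.support, G.edist v w = i) (hmono : StrictMonoOn p.getVert (Set.Iic (ℓ - 2))) :
    HasCycleOfLength G ℓ := by
  have hp : p.IsPath := (SimpleGraph.Walk.IsPath.getVert_injOn_iff p).mp (hlen ▸ hmono.injOn)
  have hlayer (t : ℕ) : G.edist v (p.getVert t) = i := hpi _ (p.getVert_mem_support t)
  have hfibre {h s t : ℕ} (hh : h ≤ i) (hst : s ≤ t) (ht : t ≤ ℓ - 2)
      (heq : f^[h] (p.getVert t) = f^[h] (p.getVert 0)) :
      f^[h] (p.getVert s) = f^[h] (p.getVert 0) :=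
    hconvex h hh _ _ _ (hmono.monotoneOn (by simp) (by simp; lia) (Nat.zero_le s))
      (hmono.monotoneOn (by simp; lia) (by simp; lia) hst) heq.symm
  have hne : p.getVert 0 ≠ p.getVert (ℓ - 2) :=
    (hmono (by simp) (by simp) (by lia : 0 < ℓ - 2)).ne
  obtain ⟨h, hi, hsplit, hmeet⟩ := hf.exists_iterate_ne_iterate_succ_eq (hlayer _) (hlayer _) hne
  obtain ⟨s, hs, hPs, hPd⟩ := exists_window (m := ℓ - 2) (d := ℓ - 2 * (h + 1))
    (P := fun t ↦ f^[h] (p.getVert t) = f^[h] (p.getVert 0)) rfl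
    hsplit.symm (fun s t hst ht ↦ hfibre (by lia) hst ht) (by lia) (by lia)
  have hjoin : f^[h + 1] (p.getVert s) = f^[h + 1] (p.getVert (s + (ℓ - 2 * (h + 1)))) := by
    rw [hfibre (by lia) (by lia) le_rfl hmeet.symm, hfibre (by lia) hs le_rfl hmeet.symm]
  have hdepth (t : ℕ) : G.edist v (p.getVert t) = (i - (h + 1) + (h + 1) : ℕ) := by
    rw [hlayer t, Nat.sub_add_cancel hi]
  obtain ⟨q, hq, hqlen, hqsup⟩ := hf.exists_isPath_of_iterate_eq (hdepth _) (hdepth _)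
    (fun h ↦ hPd (h ▸ hPs)) hjoin
  obtain ⟨r, hr, hrlen, hrsup⟩ := exists_isPath_getVert_getVert hp (hs.trans hlen.ge)
  have hcycle := hasCycleOfLength_of_isPath_of_isPath hq hr
    (fun x hxq hxr ↦ hqsup x hxq (by rw [hpi x (hrsup hxr), Nat.sub_add_cancel hi]))
    (.inl (by lia))
  rwa [hqlen, hrlen, Nat.add_sub_cancel' (by lia)] at hcycle

theorem card_layer_le [Finite V] {i ℓ : ℕ} (hno : ¬ HasCycleOfLength G ℓ) (hℓ : 3 ≤ ℓ)
    (hiℓ : 2 * i + 1 ≤ ℓ) {L : Finset V} (hL : ∀ w ∈ L, G.edist v w = i) :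
    L.card ≤ (ℓ - 2) * (G.induce (L : Set V)).indepNum := by
  by_contra! hcard
  obtain ⟨f, hf⟩ := exists_isParentFunction G v
  obtain ⟨_, hconvex⟩ := exists_linearOrder_fibre_convex f i
  obtain ⟨a, b, p, hlen, hpL, hmono⟩ := exists_increasing_walk _ hcard
  exact hno (hf.hasCycleOfLength_of_strictMonoOn hconvex hℓ hiℓ hlen
    (fun w hw ↦ hL w (hpL w hw)) hmono)

end Layers

section ShortCycles

variable {V : Type u} {G : SimpleGraph V} {ℓ x g : ℕ}

theorem exists_isolated_layer [Finite V] [Nonempty V] (hno : ¬ HasCycleOfLength G ℓ) (hℓ : 3 ≤ ℓ)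
    (hxℓ : 2 * x + 1 ≤ ℓ) (hg : 0 < g) (hgx : (ℓ - 2) * G.indepNum < g ^ x) :
    ∃ L R : Finset V, L.Nonempty ∧ L ⊆ R ∧ (∀ u ∈ L, ∀ w ∉ R, ¬ G.Adj u w) ∧
      R.card ≤ (g + 2) * L.card ∧ L.card ≤ (ℓ - 2) * (G.induce (L : Set V)).indepNum := by
  classical
  have := Fintype.ofFinite V
  obtain ⟨v⟩ := ‹Nonempty V›
  let layer (j : ℕ) : Finset V := {w | G.edist v w = j}
  have mem_layer {j : ℕ} {w : V} : w ∈ layer j ↔ G.edist v w = j := by simp [layer]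
  have card_layer (j : ℕ) (hj : j ≤ x) :
      (layer j).card ≤ (ℓ - 2) * (G.induce (layer j : Set V)).indepNum :=
    card_layer_le hno hℓ (by lia) fun w ↦ mem_layer.mp
  have hlast : (layer x).card < g ^ x := (card_layer x le_rfl).trans_lt
    ((Nat.mul_le_mul_left _ (indepNum_induce_le G _)).trans_lt hgx)
  obtain ⟨i, hi, hpos, hprev, hnext⟩ := exists_slow_growth (a := fun j ↦ (layer j).card)
    (Finset.card_pos.mpr ⟨v, by simp [mem_layer]⟩) hg hlast
  refine ⟨layer i, layer (i - 1) ∪ layer i ∪ layer (i + 1), Finset.card_pos.mp hpos,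
    fun w hw ↦ by simp [hw], fun u hu w hw huw ↦ hw ?_, ?_, card_layer i hi.le⟩
  · obtain ⟨j, hj, hji, hij⟩ := exists_edist_eq_of_adj (mem_layer.mp hu) huw
    have : j = i - 1 ∨ j = i ∨ j = i + 1 := by lia
    rcases this with rfl | rfl | rfl <;> simp [mem_layer, hj]
  · have := Finset.card_union_le (layer (i - 1) ∪ layer i) (layer (i + 1))
    have := Finset.card_union_le (layer (i - 1)) (layer i)
    grind

variable [Fintype V]

theorem card_le_of_not_hasCycleOfLength (hno : ¬ HasCycleOfLength G ℓ) (hℓ : 3 ≤ ℓ)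
    (hxℓ : 2 * x + 1 ≤ ℓ) (hg : 0 < g) (hgx : (ℓ - 2) * G.indepNum < g ^ x) :
    Fintype.card V ≤ (ℓ - 2) * (g + 2) * G.indepNum := by
  classical
  induction hn : Fintype.card V using Nat.strong_induction_on generalizing V with
  | _ n ih =>
    subst hn
    rcases isEmpty_or_nonempty V with hV | hV
    · simp
    obtain ⟨L, R, hL, hLR, hadj, hR, hcard⟩ := exists_isolated_layer hno hℓ hxℓ hg hgx
    have hVR : Fintype.card ↥((R : Set V)ᶜ) + R.card = Fintype.card V := by
      rw [Fintype.card_compl_set, ← Fintype.card_coe]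
      exact Nat.sub_add_cancel (set_fintype_card_le_univ _)
    have hrest := ih (Fintype.card ↥((R : Set V)ᶜ)) (by have := (hL.mono hLR).card_pos; lia)
      (G := G.induce (R : Set V)ᶜ) (fun h ↦ hno h.of_induce)
      ((Nat.mul_le_mul_left _ (indepNum_induce_le G _)).trans_lt hgx) rfl
    have hindep : (G.induce (L : Set V)).indepNum + (G.induce (R : Set V)ᶜ).indepNum ≤
        G.indepNum :=
      (indepNum_induce_add_le (Set.subset_univ _) (Set.subset_univ _)
        (Set.disjoint_compl_right_iff_subset.mpr (Finset.coe_subset.mpr hLR))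
        (fun u hu w hw ↦ hadj u hu w hw)).trans (indepNum_induce_le G Set.univ)
    calc Fintype.card V = Fintype.card ↥((R : Set V)ᶜ) + R.card := hVR.symm
      _ ≤ (ℓ - 2) * (g + 2) * (G.induce (R : Set V)ᶜ).indepNum +
          (g + 2) * ((ℓ - 2) * (G.induce (L : Set V)).indepNum) :=
        Nat.add_le_add hrest (hR.trans (Nat.mul_le_mul_left _ hcard))
      _ = (ℓ - 2) * (g + 2) *
          ((G.induce (L : Set V)).indepNum + (G.induce (R : Set V)ᶜ).indepNum) := by ring
      _ ≤ (ℓ - 2) * (g + 2) * G.indepNum := Nat.mul_le_mul_left _ hindep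

theorem mul_lt_one_add_pow {k x t : ℕ} (hx : 0 < x) (hxk : x ≤ 3 * k) (hxt : 9 * k ≤ x * t) :
    2 * x * k < (1 + t) ^ x := by
  rcases Nat.lt_or_ge x 2 with h | h
  · obtain rfl : x = 1 := by lia
    lia
  have hhalf : 3 * k ≤ x / 2 * t := by
    have := Nat.mul_le_mul_right t (by lia : x ≤ 3 * (x / 2))
    rw [mul_assoc] at this
    lia
  calc 2 * x * k < (1 + 3 * k) ^ 2 := by nlinarith
    _ ≤ (1 + x / 2 * t) ^ 2 := Nat.pow_le_pow_left (by lia) 2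
    _ ≤ ((1 + t) ^ (x / 2)) ^ 2 :=
      Nat.pow_le_pow_left (one_add_le_pow_of_two_add_nonneg (Nat.zero_le _) (x / 2)) 2
    _ ≤ (1 + t) ^ x := by
      rw [← pow_mul]
      exact Nat.pow_le_pow_right (by lia) (by lia)

theorem hasCycleOfLength_of_card {k : ℕ} (hk : G.indepNum ≤ k) (hV : 42 * k ^ 2 < Fintype.card V)
    (hℓ : 3 ≤ ℓ) (hℓk : ℓ ≤ 6 * k) : HasCycleOfLength G ℓ := by
  by_contra hno
  obtain ⟨x, hx⟩ : ∃ x, x = (ℓ - 1) / 2 := ⟨_, rfl⟩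
  obtain ⟨t, ht⟩ : ∃ t, t = 9 * k / x + 1 := ⟨_, rfl⟩
  have hdm := Nat.div_add_mod (9 * k) x
  have hmod := Nat.mod_lt (9 * k) (by lia : 0 < x)
  have hxt : x * t = x * (9 * k / x) + x := by rw [ht, mul_add, mul_one]
  have hgrow : (ℓ - 2) * G.indepNum < (1 + t) ^ x :=
    (Nat.mul_le_mul (by lia : ℓ - 2 ≤ 2 * x) hk).trans_lt
      (mul_lt_one_add_pow (by lia) (by lia) (by lia))
  have hcoeff : (ℓ - 2) * (1 + t + 2) ≤ 42 * k := by
    calc (ℓ - 2) * (1 + t + 2) ≤ 2 * x * (1 + t + 2) := Nat.mul_le_mul_right _ (by lia)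
      _ = 2 * (x * t) + 6 * x := by ring
      _ ≤ 42 * k := by lia
  refine hV.not_ge ?_
  calc Fintype.card V ≤ (ℓ - 2) * (1 + t + 2) * G.indepNum :=
        card_le_of_not_hasCycleOfLength hno hℓ (by lia) (by lia) hgrow
    _ ≤ 42 * k * k := Nat.mul_le_mul hcoeff hk
    _ = 42 * k ^ 2 := by ring

end ShortCycles

section Shrinking

variable {k m : ℕ}

/-- Every Hamiltonian graph with independence number at most `k` on at least `m` vertices has a
cycle through all vertices but one. -/
def ShrinksHamiltonCycles (k m : ℕ) : Prop :=
  ∀ (W : Type u) [Fintype W] [DecidableEq W] (H : SimpleGraph W), H.IsHamiltonian →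
    H.indepNum ≤ k → m ≤ Fintype.card W → HasCycleOfLength H (Fintype.card W - 1)

variable {V : Type u} {G : SimpleGraph V} {ℓ : ℕ}

theorem card_toFinset_support_of_isCycle [DecidableEq V] {u : V} {w : G.Walk u u} (hw : w.IsCycle) :
    w.support.toFinset.card = w.length := by
  rw [← w.cons_tail_support, List.toFinset_cons,
    Finset.insert_eq_of_mem (List.mem_toFinset.mpr (w.end_mem_tail_support hw.not_nil)),
    List.toFinset_card_of_nodup hw.support_nodup, List.length_tail,
    SimpleGraph.Walk.length_support, Nat.add_sub_cancel]

theorem exists_isHamiltonian_induce [DecidableEq V] (h : HasCycleOfLength G ℓ) :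
    ∃ S : Finset V, S.card = ℓ ∧ (G.induce (S : Set V)).IsHamiltonian := by
  obtain ⟨u, w, hw, rfl⟩ := h
  have hcard := card_toFinset_support_of_isCycle hw
  let w' := w.induce (w.support.toFinset : Set V) fun x hx ↦ by simpa using hx
  have hw' : w'.map (SimpleGraph.Embedding.induce _).toHom = w := w.map_induce _
  refine ⟨w.support.toFinset, hcard, fun _ ↦ ⟨_, w', ?_⟩⟩
  rw [SimpleGraph.Walk.isHamiltonianCycle_iff_isCycle_and_length_eq]
  refine ⟨.of_map (f := (SimpleGraph.Embedding.induce _).toHom) (by rwa [hw']), ?_⟩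
  have hlen : w'.length = w.length :=
    (w'.length_map _).symm.trans (congrArg SimpleGraph.Walk.length hw')
  rw [hlen, ← hcard]
  exact (Fintype.card_coe _).symm

theorem ShrinksHamiltonCycles.hasCycleOfLength_pred [Finite V]
    (hkm : ShrinksHamiltonCycles.{u} k m) (hk : G.indepNum ≤ k) (hℓ : m ≤ ℓ)
    (h : HasCycleOfLength G ℓ) : HasCycleOfLength G (ℓ - 1) := by
  classical
  obtain ⟨S, rfl, hS⟩ := exists_isHamiltonian_induce h
  have hcard : Fintype.card ↥(S : Set V) = S.card := by simp
  rw [← hcard] at hℓ ⊢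
  exact (hkm _ _ hS ((indepNum_induce_le G _).trans hk) hℓ).of_induce

theorem ShrinksHamiltonCycles.hasCycleOfLength [Finite V] (hkm : ShrinksHamiltonCycles.{u} k m)
    (hk : G.indepNum ≤ k) {n : ℕ} (hn : HasCycleOfLength G n) (hm : m ≤ ℓ) (hℓn : ℓ ≤ n) :
    HasCycleOfLength G ℓ := by
  induction hℓn using Nat.decreasingInduction with
  | self => exact hn
  | of_succ i _ ih => exact hkm.hasCycleOfLength_pred (ℓ := i + 1) hk (by lia) (ih (by lia))

theorem ShrinksHamiltonCycles.isPancyclic [Fintype V] [DecidableEq V]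
    (hkm : ShrinksHamiltonCycles.{u} k m) (hG : G.IsHamiltonian) (hk : G.indepNum ≤ k)
    (hV : 2 * m + 42 * k ^ 2 < Fintype.card V) : IsPancyclic G := by
  intro ℓ h3 hℓ
  have : Nontrivial V := Fintype.one_lt_card_iff_nontrivial.mp (by lia)
  obtain ⟨v⟩ := hG.connected.nonempty
  obtain ⟨h, hh⟩ := hG.exists_isHamiltonianCycle v
  have hn : HasCycleOfLength G (Fintype.card V) := ⟨v, h, hh.isCycle, hh.length_eq⟩
  rcases le_or_gt m ℓ with hmℓ | hℓm
  · exact hkm.hasCycleOfLength hk hn hmℓ hℓ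
  rcases le_or_gt ℓ (6 * k) with hℓk | hkℓ
  · exact hasCycleOfLength_of_card hk (by lia) h3 hℓk
  obtain ⟨u, c, hc, hclen⟩ := hkm.hasCycleOfLength (ℓ := 2 * m) hk hn (by lia) (by lia)
  have hcard := card_toFinset_support_of_isCycle hc
  refine hasCycleOfLength_of_disjoint_isCycle (B := c.support.toFinsetᶜ) hh hc
    (fun x hx ↦ by simpa using hx) hk ?_ hkℓ.le (by lia)
  rw [Finset.card_compl]
  lia

end Shrinking

theorem statement2_general {f : ℕ → ℝ} (hf : ∀ k : ℕ, 0 < k → (k : ℝ) ^ 2 ≤ f k)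
    (h : ∃ c : ℝ, 0 < c ∧ ∀ k : ℕ, 0 < k → ∀ (V : Type u) [Fintype V] [DecidableEq V]
      (G : SimpleGraph V), G.IsHamiltonian → G.indepNum ≤ k → c * f k ≤ Fintype.card V →
      HasCycleOfLength G (Fintype.card V - 1)) :
    ∃ c' : ℝ, 0 < c' ∧ ∀ k : ℕ, 0 < k → ∀ (V : Type u) [Fintype V] [DecidableEq V]
      (G : SimpleGraph V), G.IsHamiltonian → G.indepNum ≤ k → c' * f k ≤ Fintype.card V →
      IsPancyclic G := by
  obtain ⟨c, hc, h⟩ := h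
  refine ⟨2 * c + 44, by linarith, fun k hk V _ _ G hG hα hV ↦ ?_⟩
  have hfk : (k : ℝ) ^ 2 ≤ f k := hf k hk
  have hk1 : (1 : ℝ) ≤ (k : ℝ) ^ 2 := one_le_pow₀ (Nat.one_le_cast.mpr hk)
  have hshrink : ShrinksHamiltonCycles.{u} k ⌈c * f k⌉₊ := fun W _ _ H hH hαH hW ↦
    h k hk W H hH hαH ((Nat.le_ceil _).trans (Nat.cast_le.mpr hW))
  refine hshrink.isPancyclic hG hα (Nat.cast_lt (α := ℝ).mp ?_)
  have hceil : (⌈c * f k⌉₊ : ℝ) < c * f k + 1 := Nat.ceil_lt_add_one (by nlinarith)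
  push_cast
  linarith

/-- If there is a constant `c > 0` such that every Hamiltonian graph `G` on
`n ≥ c·k^(11/5)` vertices with independence number at most `k` contains, for every vertex set
`W` with `|W| ≤ 20·k²`, a cycle of length `n − 1` through all of `W`, then there is a constant
`c' > 0` such that every Hamiltonian graph on `n ≥ c'·k^(11/5)` vertices with independence
number at most `k` is pancyclic. -/
theorem statement2
    (h : ∃ c : ℝ, 0 < c ∧
      ∀ (k : ℕ), 0 < k →
        ∀ (V : Type) [Fintype V] [DecidableEq V] (G : SimpleGraph V) (W : Finset V),
          G.IsHamiltonian →
          (∀ s : Finset V, (∀ u ∈ s, ∀ v ∈ s, u ≠ v → ¬ G.Adj u v) → s.card ≤ k) →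
          c * (k : ℝ) ^ ((11 : ℝ) / 5) ≤ (Fintype.card V : ℝ) →
          W.card ≤ 20 * k ^ 2 →
          ∃ (u : V) (w : G.Walk u u), w.IsCycle ∧ w.length = Fintype.card V - 1 ∧
            ∀ x ∈ W, x ∈ w.support) :
    ∃ c' : ℝ, 0 < c' ∧
      ∀ (k : ℕ), 0 < k →
        ∀ (V : Type) [Fintype V] [DecidableEq V] (G : SimpleGraph V),
          G.IsHamiltonian →
          (∀ s : Finset V, (∀ u ∈ s, ∀ v ∈ s, u ≠ v → ¬ G.Adj u v) → s.card ≤ k) →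
          c' * (k : ℝ) ^ ((11 : ℝ) / 5) ≤ (Fintype.card V : ℝ) →
          ∀ ℓ : ℕ, 3 ≤ ℓ → ℓ ≤ Fintype.card V →
            ∃ (u : V) (w : G.Walk u u), w.IsCycle ∧ w.length = ℓ := by
  simp only [← indepNum_le_iff] at h ⊢
  obtain ⟨c, hc, h⟩ := h
  refine statement2_general (fun k hk ↦ ?_) ⟨c, hc, fun k hk V _ _ G hG hα hV ↦ ?_⟩
  · rw [← Real.rpow_natCast]
    exact Real.rpow_le_rpow_of_exponent_le (Nat.one_le_cast.mpr hk) (by norm_num)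
  · obtain ⟨u, w, hw, hlen, -⟩ := h k hk V G ∅ hG hα hV (by simp)
    exact ⟨u, w, hw, hlen⟩
end

section
/- There exists a constant c > 0 such that the following holds. Suppose G, H, W, k, n satisfy Assumption (★) with constant c. Let p > 1 be an integer and x a positive integer, and let 𝒜 be a simple arc-system in G of size b_p·x^{p(p−1)/2} and length a_p·x. Then either G[𝒜] contains an independent set of size x^p + 1, or there is a non-empty subfamily 𝒜' ⊆ 𝒜 such that every arc A ∈ 𝒜' is good in 𝒜'. -/
open Finset

/-- `σ` lists the vertices of `G` in the order of a Hamilton cycle `H`: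
it is a bijection from `ZMod n` such that consecutive indices give adjacent vertices. -/
def IsHamOrder {V : Type} [Fintype V] (G : SimpleGraph V) (n : ℕ) (σ : ZMod n → V) : Prop :=
  Function.Bijective σ ∧ ∀ i : ZMod n, G.Adj (σ i) (σ (i + 1))

/-- A vertex is problematic if it has degree at most `2k` or belongs to `W`. -/
def Problematic {V : Type} [Fintype V] [DecidableEq V] (G : SimpleGraph V)
    [DecidableRel G.Adj] (W : Finset V) (k : ℕ) (v : V) : Prop :=
  G.degree v ≤ 2 * k ∨ v ∈ W

/-- `G` has a cycle of length `ℓ` passing through all vertices of `S`. -/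
def HasCycleThrough {V : Type} (G : SimpleGraph V) (ℓ : ℕ) (S : Set V) : Prop :=
  ∃ (u : V) (w : G.Walk u u), w.IsCycle ∧ w.length = ℓ ∧ ∀ x ∈ S, x ∈ w.support

/-- Assumption (★) with constant `c`: `G` is a graph on `n` vertices with Hamilton cycle
(order) `σ`, independence number at most `k`, `W` has at most `20k²` vertices, `G` has no
cycle of length `n − 1` through all of `W`, and `n ≥ c·k^(11/5)`. -/
def StarAssumption {V : Type} [Fintype V] [DecidableEq V] (G : SimpleGraph V) [DecidableRel G.Adj]
    (n k : ℕ) (σ : ZMod n → V) (W : Finset V) (c : ℝ) : Prop :=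
  Fintype.card V = n ∧ IsHamOrder G n σ ∧
  (∀ s : Finset V, (∀ u ∈ s, ∀ v ∈ s, u ≠ v → ¬ G.Adj u v) → s.card ≤ k) ∧
  W.card ≤ 20 * k ^ 2 ∧
  ¬ HasCycleThrough G (n - 1) (W : Set V) ∧
  c * (k : ℝ) ^ ((11 : ℝ) / 5) ≤ (n : ℝ)

/-- Two vertices are consecutive if they are neighbours on the Hamilton cycle. -/
def Consec {V : Type} (n : ℕ) (σ : ZMod n → V) (u v : V) : Prop :=
  ∃ i : ZMod n, (σ i = u ∧ σ (i + 1) = v) ∨ (σ i = v ∧ σ (i + 1) = u)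

/-- A continuous set of vertices: one forming a subpath (interval) of the Hamilton cycle. -/
def ContinuousSet {V : Type} [DecidableEq V] (n : ℕ) (σ : ZMod n → V) (S : Finset V) : Prop :=
  ∃ (i : ZMod n) (m : ℕ), S = (Finset.range m).image (fun j : ℕ => σ (i + (j : ZMod n)))

/-- `B` is a continuous closure of `A`: a minimum-size continuous set containing `A`. -/
def IsClosure {V : Type} [DecidableEq V] (n : ℕ) (σ : ZMod n → V) (A B : Finset V) : Prop :=
  ContinuousSet n σ B ∧ A ⊆ B ∧
    ∀ B' : Finset V, ContinuousSet n σ B' → A ⊆ B' → B.card ≤ B'.card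

/-- An arc-system: a family of arcs together with a choice of continuous closure for each
arc, such that closures of distinct arcs are disjoint, closures contain no problematic
vertex, and no arc contains two consecutive vertices. -/
structure ArcSystem {V : Type} [Fintype V] [DecidableEq V] (G : SimpleGraph V)
    [DecidableRel G.Adj] (n k : ℕ) (σ : ZMod n → V) (W : Finset V) where
  arcs : Finset (Finset V)
  cl : Finset V → Finset V
  closure_spec : ∀ A ∈ arcs, IsClosure n σ A (cl A)
  closures_disjoint : ∀ A ∈ arcs, ∀ B ∈ arcs, A ≠ B → Disjoint (cl A) (cl B)
  no_problematic : ∀ A ∈ arcs, ∀ v ∈ cl A, ¬ Problematic G W k v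
  no_consec : ∀ A ∈ arcs, ∀ u ∈ A, ∀ v ∈ A, u ≠ v → ¬ Consec n σ u v

namespace ArcSystem

variable {V : Type} [Fintype V] [DecidableEq V] {G : SimpleGraph V} [DecidableRel G.Adj]
  {n k : ℕ} {σ : ZMod n → V} {W : Finset V}

/-- An arc-system is independent if every closure has at most `k` vertices. -/
def Independent (𝒜 : ArcSystem G n k σ W) : Prop :=
  ∀ A ∈ 𝒜.arcs, (𝒜.cl A).card ≤ k

/-- Every arc of the system has at least `l` vertices. -/
def LengthGe (𝒜 : ArcSystem G n k σ W) (l : ℕ) : Prop :=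
  ∀ A ∈ 𝒜.arcs, l ≤ A.card

end ArcSystem

/-- A vertex set `s` is `M₂`-free (for `G`) if the subgraph induced by `s`
contains no two vertex-disjoint edges. -/
def M2Free {V : Type} (G : SimpleGraph V) (s : Finset V) : Prop :=
  ¬ ∃ a b x y : V, a ∈ s ∧ b ∈ s ∧ x ∈ s ∧ y ∈ s ∧ G.Adj a b ∧ G.Adj x y ∧
      a ≠ x ∧ a ≠ y ∧ b ≠ x ∧ b ≠ y

namespace ArcSystem

variable {V : Type} [Fintype V] [DecidableEq V] {G : SimpleGraph V} [DecidableRel G.Adj]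
  {n k : ℕ} {σ : ZMod n → V} {W : Finset V}

/-- An arc-system is simple if it is independent and any two distinct arcs induce an
`M₂`-free subgraph of `G`. -/
def Simple (𝒜 : ArcSystem G n k σ W) : Prop :=
  𝒜.Independent ∧ ∀ A ∈ 𝒜.arcs, ∀ B ∈ 𝒜.arcs, A ≠ B → M2Free G (A ∪ B)

end ArcSystem

/-- `G[𝒜]` contains an independent set of size at least `m`. -/
def HasIndepInArcs {V : Type} [Fintype V] [DecidableEq V] (G : SimpleGraph V)
    [DecidableRel G.Adj] {n k : ℕ} {σ : ZMod n → V} {W : Finset V}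
    (𝒜 : ArcSystem G n k σ W) (m : ℕ) : Prop :=
  ∃ I : Finset V, (∀ v ∈ I, ∃ A ∈ 𝒜.arcs, v ∈ A) ∧
    (∀ u ∈ I, ∀ v ∈ I, u ≠ v → ¬ G.Adj u v) ∧ m ≤ I.card

/-- The constants `a_p = 10·3^p`. -/
def aP (p : ℕ) : ℕ := 10 * 3 ^ p

/-- The constants `b_p = 1000^p·4^(p²)`. -/
def bP (p : ℕ) : ℕ := 1000 ^ p * 4 ^ (p ^ 2)

/-- Arc `A` is good (with parameters `p`, `x`) in the family `arcsSet`: to at least half of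
the vertices `v` of `A` one can assign pairwise disjoint sets `F v` of
`4·b_{p−1}·x^((p−1)(p−2)/2)` arcs of the family, each containing a `G`-neighbour of `v`. -/
def GoodArc {V : Type} [Fintype V] [DecidableEq V] (G : SimpleGraph V) [DecidableRel G.Adj]
    (arcsSet : Finset (Finset V)) (p x : ℕ) (A : Finset V) : Prop :=
  ∃ (S : Finset V) (F : V → Finset (Finset V)), S ⊆ A ∧ A.card ≤ 2 * S.card ∧
    (∀ v ∈ S, F v ⊆ arcsSet ∧ (F v).card = 4 * bP (p - 1) * x ^ ((p - 1) * (p - 2) / 2) ∧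
      ∀ B ∈ F v, ∃ b ∈ B, G.Adj v b) ∧
    ∀ u ∈ S, ∀ v ∈ S, u ≠ v → Disjoint (F u) (F v)

/-!
Suppose every non-empty subfamily `𝓑` has an arc that is not good in `𝓑`, and put
`q = 4·b_{p−1}·x^{(p−1)(p−2)/2}`. Assign disjoint `q`-sets of arcs of `𝓑` to as many vertices of a
bad arc `A` as possible. Fewer than half of the vertices receive one, and by maximality each of the
remaining vertices, forming a set `B`, has neighbours in fewer than `q` arcs of `𝓑` outside the set
`U` of the at most `q·|B|` assigned arcs.

Removing bad arcs one at a time and adding them back in reverse order, colour the arcs greedily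
with `4q` colours, maintaining an independent set in each colour class. The total number of
conflicts of `B` with the earlier arcs is at most `2q·|B|`, so some colour has at most `|B|/2` of
them. By `M₂`-freeness the edges between `A` and an arc of `U` are covered by one vertex, so each
conflict costs one vertex, and two more make `A` independent; the independent set of that colour
thus grows by at least `|B|/2 - 2 ≥ x`. In the end the `4q` independent sets have total size at
least `x` times the number of arcs, and the largest of them has more than `x^p` vertices.
-/

section M2Free

lemma M2Free.mono {V : Type} {G : SimpleGraph V} {s t : Finset V} (ht : M2Free G t) (hst : s ⊆ t) :
    M2Free G s :=
  fun ⟨a, b, x, y, ha, hb, hx, hy, h⟩ ↦ ht ⟨a, b, x, y, hst ha, hst hb, hst hx, hst hy, h⟩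

variable {V : Type} [DecidableEq V] {G : SimpleGraph V} {A D : Finset V}

lemma M2Free.exists_isIndepSet_sdiff (h : M2Free G A) :
    ∃ Z : Finset V, #Z ≤ 2 ∧ G.IsIndepSet (A \ Z : Finset V) := by
  by_cases hE : ∃ a ∈ A, ∃ b ∈ A, G.Adj a b
  · obtain ⟨a, ha, b, hb, hab⟩ := hE
    refine ⟨{a, b}, card_le_two, fun u hu v hv _ huv ↦ ?_⟩
    simp only [mem_coe, mem_sdiff, mem_insert, mem_singleton, not_or] at hu hv
    exact h ⟨u, v, a, b, hu.1, hv.1, ha, hb, huv, hab, hu.2.1, hu.2.2, hv.2.1, hv.2.2⟩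
  · refine ⟨∅, by simp, fun u hu v hv _ huv ↦ hE ⟨u, ?_, v, ?_, huv⟩⟩ <;> simp_all

lemma M2Free.eq_or_eq_of_adj (h : M2Free G (A ∪ D)) (hAD : Disjoint A D) {a a' d d' : V}
    (ha : a ∈ A) (hd : d ∈ D) (had : G.Adj a d) (ha' : a' ∈ A) (hd' : d' ∈ D)
    (had' : G.Adj a' d') : a = a' ∨ d = d' := by
  by_contra! hne
  exact h ⟨a, d, a', d', mem_union_left _ ha, mem_union_right _ hd, mem_union_left _ ha',
    mem_union_right _ hd', had, had', hne.1, disjoint_iff_ne.1 hAD a ha d' hd',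
    (disjoint_iff_ne.1 hAD a' ha' d hd).symm, hne.2⟩

lemma M2Free.exists_cover_between (h : M2Free G (A ∪ D)) (hAD : Disjoint A D) :
    ∃ Z : Finset V, #Z ≤ 1 ∧ ∀ a ∈ A, ∀ d ∈ D, G.Adj a d → a ∈ Z ∨ d ∈ Z := by
  by_cases hE : ∃ a ∈ A, ∃ d ∈ D, G.Adj a d
  · obtain ⟨a, ha, d, hd, had⟩ := hE
    by_cases hA : ∀ u ∈ A, ∀ w ∈ D, G.Adj u w → u = a
    · exact ⟨{a}, by simp, fun u hu w hw huw ↦ .inl (by simp [hA u hu w hw huw])⟩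
    push Not at hA
    obtain ⟨a', ha', d', hd', had', hne⟩ := hA
    have hdd' : d' = d := (h.eq_or_eq_of_adj hAD ha' hd' had' ha hd had).resolve_left hne
    refine ⟨{d}, by simp, fun u hu w hw huw ↦ .inr (mem_singleton.2 ?_)⟩
    obtain rfl | hwd := h.eq_or_eq_of_adj hAD hu hw huw ha hd had
    · exact ((h.eq_or_eq_of_adj hAD hu hw huw ha' hd' had').resolve_left hne.symm).trans hdd'
    · exact hwd
  · push Not at hE
    exact ⟨∅, by simp, fun a ha d hd had ↦ absurd had (hE a ha d hd)⟩

lemma m2Free_union_of_pairwise {𝓐 : Finset (Finset V)} (h𝓐 : 1 < #𝓐)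
    (hM2 : (𝓐 : Set (Finset V)).Pairwise fun A B ↦ M2Free G (A ∪ B)) :
    ∀ A ∈ 𝓐, ∀ B ∈ 𝓐, M2Free G (A ∪ B) := by
  intro A hA B hB
  obtain rfl | hAB := eq_or_ne A B
  · obtain ⟨D, hD, hDA⟩ := exists_mem_ne h𝓐 A
    exact (hM2 hA hD hDA.symm).mono (union_subset subset_union_left subset_union_left)
  · exact hM2 hA hB hAB

end M2Free

section Allocation

variable {V : Type*} {G : SimpleGraph V} {𝓕 𝓖 : Finset (Finset V)} {A S : Finset V} {q : ℕ} {v : V}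

open Classical in
/-- The members of the family `𝓕` that contain a neighbour of `v`. -/
noncomputable def arcNeighbors (G : SimpleGraph V) (𝓕 : Finset (Finset V)) (v : V) :
    Finset (Finset V) :=
  {D ∈ 𝓕 | ∃ b ∈ D, G.Adj v b}

lemma mem_arcNeighbors {D : Finset V} :
    D ∈ arcNeighbors G 𝓕 v ↔ D ∈ 𝓕 ∧ ∃ b ∈ D, G.Adj v b := by
  simp only [arcNeighbors, mem_filter]

lemma arcNeighbors_mono (h : 𝓕 ⊆ 𝓖) : arcNeighbors G 𝓕 v ⊆ arcNeighbors G 𝓖 v := by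
  classical exact filter_subset_filter _ h

/-- An allocation of pairwise disjoint sets of `q` members of `𝓕` to the vertices of `S`, each
vertex receiving only sets that contain one of its neighbours. Goodness of an arc asks for an
allocation to at least half of its vertices. -/
structure IsAllocation (G : SimpleGraph V) (𝓕 : Finset (Finset V)) (q : ℕ) (S : Finset V)
    (F : V → Finset (Finset V)) : Prop where
  subset : ∀ v ∈ S, F v ⊆ arcNeighbors G 𝓕 v
  card_eq : ∀ v ∈ S, #(F v) = q
  pairwiseDisjoint : (S : Set V).PairwiseDisjoint F

variable [DecidableEq V]

lemma IsAllocation.insert {F : V → Finset (Finset V)} {E : Finset (Finset V)}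
    (h : IsAllocation G 𝓕 q S F) (hv : v ∉ S)
    (hE : E ⊆ arcNeighbors G (𝓕 \ S.biUnion F) v) (hEq : #E = q) :
    IsAllocation G 𝓕 q (insert v S) (Function.update F v E) := by
  have hF : ∀ u ∈ S, Function.update F v E u = F u := fun u hu ↦
    Function.update_of_ne (ne_of_mem_of_not_mem hu hv) _ _
  refine ⟨?_, ?_, ?_⟩
  · rw [forall_mem_insert, Function.update_self]
    exact ⟨hE.trans (arcNeighbors_mono sdiff_subset), fun u hu ↦ hF u hu ▸ h.subset u hu⟩
  · rw [forall_mem_insert, Function.update_self]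
    exact ⟨hEq, fun u hu ↦ hF u hu ▸ h.card_eq u hu⟩
  · rw [coe_insert, Set.pairwiseDisjoint_insert_of_notMem (mem_coe.not.2 hv)]
    refine ⟨fun u hu w hw huw ↦ ?_, fun u hu ↦ ?_⟩
    · simpa only [Function.onFun, hF u hu, hF w hw] using h.pairwiseDisjoint hu hw huw
    · rw [Function.update_self, hF u hu, disjoint_left]
      exact fun D hDE hDF ↦ (mem_sdiff.1 (mem_arcNeighbors.1 (hE hDE)).1).2
        (mem_biUnion.2 ⟨u, hu, hDF⟩)

lemma exists_maximal_isAllocation (G : SimpleGraph V) (𝓕 : Finset (Finset V)) (q : ℕ)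
    (A : Finset V) :
    ∃ S ⊆ A, ∃ F, IsAllocation G 𝓕 q S F ∧
      ∀ v ∈ A \ S, #(arcNeighbors G (𝓕 \ S.biUnion F) v) < q := by
  classical
  have hempty : ∅ ∈ {S ∈ A.powerset | ∃ F, IsAllocation G 𝓕 q S F} := by
    rw [mem_filter]
    exact ⟨empty_mem_powerset A, fun _ ↦ ∅, by simp, by simp, by simp⟩
  obtain ⟨S, hS, hmax⟩ := exists_max_image _ card ⟨∅, hempty⟩
  simp only [mem_filter, mem_powerset, and_imp, forall_exists_index] at hS hmax
  obtain ⟨hSA, F, hF⟩ := hS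
  refine ⟨S, hSA, F, hF, fun v hv ↦ ?_⟩
  by_contra! hq
  obtain ⟨hvA, hvS⟩ := mem_sdiff.1 hv
  obtain ⟨E, hE, hEq⟩ := exists_subset_card_eq hq
  have hle := hmax _ (insert_subset hvA hSA) _ (hF.insert hvS hE hEq)
  exact hle.not_gt (card_lt_card (ssubset_insert hvS))

/-- `A` is sparse in `𝓕` (with quota `q`) if some set `B` of at least half of its vertices and
some exceptional set `U` of at most `q·|B|` sets are such that every vertex of `B` has neighbours
in at most `q` members of `𝓕` outside `U`. This is what failure of goodness provides. -/
def IsSparse (G : SimpleGraph V) (𝓕 : Finset (Finset V)) (q : ℕ) (A : Finset V) : Prop :=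
  ∃ B ⊆ A, ∃ U : Finset (Finset V), #A ≤ 2 * #B ∧ #U ≤ q * #B ∧
    ∀ v ∈ B, #(arcNeighbors G (𝓕 \ U) v) ≤ q

lemma exists_isAllocation_or_isSparse (G : SimpleGraph V) (𝓕 : Finset (Finset V)) (q : ℕ)
    (A : Finset V) :
    (∃ S ⊆ A, #A ≤ 2 * #S ∧ ∃ F, IsAllocation G 𝓕 q S F) ∨ IsSparse G 𝓕 q A := by
  obtain ⟨S, hSA, F, hF, hfew⟩ := exists_maximal_isAllocation G 𝓕 q A
  refine or_iff_not_imp_left.2 fun hnot ↦ ?_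
  have hSlt : 2 * #S < #A := by
    by_contra! hle
    exact hnot ⟨S, hSA, hle, F, hF⟩
  have hcard : #(A \ S) = #A - #S := card_sdiff_of_subset hSA
  refine ⟨A \ S, sdiff_subset, S.biUnion F, by lia, ?_, fun v hv ↦ (hfew v hv).le⟩
  calc #(S.biUnion F) ≤ #S * q := card_biUnion_le_card_mul _ _ _ fun v hv ↦ (hF.card_eq v hv).le
    _ ≤ #(A \ S) * q := Nat.mul_le_mul_right q (by lia)
    _ = q * #(A \ S) := mul_comm _ _

end Allocation

section Extension

variable {V : Type} [DecidableEq V] {G : SimpleGraph V} {𝓕 : Finset (Finset V)}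
  {A B I : Finset V} {q : ℕ}

lemma exists_cover_biUnion (hdisj : ∀ D ∈ 𝓕, Disjoint A D) (hM2 : ∀ D ∈ 𝓕, M2Free G (A ∪ D)) :
    ∃ Z : Finset V, #Z ≤ #𝓕 ∧ ∀ D ∈ 𝓕, ∀ a ∈ A, ∀ d ∈ D, G.Adj a d → a ∈ Z ∨ d ∈ Z := by
  choose! Z hZcard hZ using fun D hD ↦ (hM2 D hD).exists_cover_between (hdisj D hD)
  refine ⟨𝓕.biUnion Z, (card_biUnion_le_card_mul 𝓕 Z 1 hZcard).trans_eq (mul_one _), ?_⟩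
  intro D hD a ha d hd had
  exact (hZ D hD a ha d hd had).imp (subset_biUnion_of_mem Z hD ·) (subset_biUnion_of_mem Z hD ·)

lemma exists_isIndepSet_extension (U : Finset (Finset V)) (hBA : B ⊆ A) (hA : M2Free G A)
    (hdisj : ∀ D ∈ 𝓕, Disjoint A D) (hM2 : ∀ D ∈ 𝓕, M2Free G (A ∪ D))
    (hI : G.IsIndepSet (I : Set V)) (hI𝓕 : ∀ v ∈ I, ∃ D ∈ 𝓕, v ∈ D) :
    ∃ J ⊆ I ∪ B, G.IsIndepSet (J : Set V) ∧
      #I + #B ≤ #J + (2 + #(𝓕 ∩ U) + ∑ v ∈ B, #(arcNeighbors G (𝓕 \ U) v)) := by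
  obtain ⟨T, hTcard, hT⟩ := hA.exists_isIndepSet_sdiff
  obtain ⟨Z, hZcard, hZ⟩ := exists_cover_biUnion (𝓕 := 𝓕 ∩ U)
    (fun D hD ↦ hdisj D (mem_inter.1 hD).1) (fun D hD ↦ hM2 D (mem_inter.1 hD).1)
  let X := {v ∈ B | (arcNeighbors G (𝓕 \ U) v).Nonempty}
  have hXcard : #X ≤ ∑ v ∈ B, #(arcNeighbors G (𝓕 \ U) v) := by
    rw [card_filter]
    refine sum_le_sum fun v _ ↦ ?_
    split_ifs with hv
    exacts [hv.card_pos, Nat.zero_le _]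
  have hcross : ∀ u ∈ B, u ∉ Z → u ∉ X → ∀ v ∈ I, v ∉ Z → ¬ G.Adj u v := by
    intro u huB huZ huX v hvI hvZ huv
    obtain ⟨D, hD, hvD⟩ := hI𝓕 v hvI
    by_cases hDU : D ∈ U
    · exact (hZ D (mem_inter.2 ⟨hD, hDU⟩) u (hBA huB) v hvD huv).elim huZ hvZ
    · exact huX (mem_filter.2
        ⟨huB, D, mem_arcNeighbors.2 ⟨mem_sdiff.2 ⟨hD, hDU⟩, v, hvD, huv⟩⟩)
  refine ⟨(I ∪ B) \ (T ∪ Z ∪ X), sdiff_subset, ?_, ?_⟩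
  · intro u hu v hv huv hadj
    simp only [coe_sdiff, coe_union, Set.mem_sdiff, Set.mem_union, mem_coe, not_or] at hu hv
    obtain ⟨huI | huB, ⟨huT, huZ⟩, huX⟩ := hu <;> obtain ⟨hvI | hvB, ⟨hvT, hvZ⟩, hvX⟩ := hv
    · exact hI huI hvI huv hadj
    · exact hcross v hvB hvZ hvX u huI huZ hadj.symm
    · exact hcross u huB huZ huX v hvI hvZ hadj
    · exact hT (mem_sdiff.2 ⟨hBA huB, huT⟩) (mem_sdiff.2 ⟨hBA hvB, hvT⟩) huv hadj
  · have hIB : Disjoint I B := disjoint_left.2 fun v hvI hvB ↦ by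
      obtain ⟨D, hD, hvD⟩ := hI𝓕 v hvI
      exact disjoint_left.1 (hdisj D hD) (hBA hvB) hvD
    calc #I + #B = #(I ∪ B) := (card_union_of_disjoint hIB).symm
      _ ≤ #((I ∪ B) \ (T ∪ Z ∪ X)) + #(T ∪ Z ∪ X) := card_le_card_sdiff_add_card
      _ ≤ #((I ∪ B) \ (T ∪ Z ∪ X)) + (#T + #Z + #X) := by
        gcongr
        exact (card_union_le _ _).trans (Nat.add_le_add_right (card_union_le _ _) _)
      _ ≤ _ := by gcongr

end Extension

section Coloring

variable {V : Type} [DecidableEq V] {κ : Type*} {G : SimpleGraph V}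
  {𝓕 U : Finset (Finset V)} {A B : Finset V} {q t : ℕ}

lemma sum_card_arcNeighbors_filter [Fintype κ] [DecidableEq κ] (f : Finset V → κ) (v : V) :
    ∑ c, #(arcNeighbors G ({D ∈ 𝓕 | f D = c} \ U) v) = #(arcNeighbors G (𝓕 \ U) v) := by
  rw [card_eq_sum_card_fiberwise (f := f) (t := univ) fun _ _ ↦ mem_coe.2 (mem_univ _)]
  refine sum_congr rfl fun c _ ↦ congrArg card ?_
  ext D
  simp only [mem_arcNeighbors, mem_sdiff, mem_filter]
  tauto

lemma exists_color_conflicts_le [Fintype κ] [DecidableEq κ] [Nonempty κ] (f : Finset V → κ)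
    (hκ : 4 * q ≤ Fintype.card κ) (hU : #U ≤ q * #B)
    (hB : ∀ v ∈ B, #(arcNeighbors G (𝓕 \ U) v) ≤ q) :
    ∃ c, 2 * (#({D ∈ 𝓕 | f D = c} ∩ U) +
      ∑ v ∈ B, #(arcNeighbors G ({D ∈ 𝓕 | f D = c} \ U) v)) ≤ #B := by
  have hUsum : ∑ c, #({D ∈ 𝓕 | f D = c} ∩ U) ≤ q * #B := calc
    _ = #(𝓕 ∩ U) := by
      simp only [filter_inter]
      exact (card_eq_sum_card_fiberwise fun _ _ ↦ mem_coe.2 (mem_univ _)).symm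
    _ ≤ q * #B := (card_le_card inter_subset_right).trans hU
  have hBsum : ∑ c, ∑ v ∈ B, #(arcNeighbors G ({D ∈ 𝓕 | f D = c} \ U) v) ≤ q * #B := by
    rw [sum_comm, mul_comm, ← smul_eq_mul]
    simpa only [sum_card_arcNeighbors_filter] using sum_le_card_nsmul _ _ _ hB
  obtain ⟨c, -, hc⟩ := exists_le_of_sum_le univ_nonempty (g := fun _ : κ ↦ #B)
    (f := fun c ↦ 2 * (#({D ∈ 𝓕 | f D = c} ∩ U) +
      ∑ v ∈ B, #(arcNeighbors G ({D ∈ 𝓕 | f D = c} \ U) v))) (by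
    calc _ ≤ 4 * q * #B := by rw [← mul_sum, sum_add_distrib]; lia
      _ ≤ Fintype.card κ * #B := by gcongr
      _ = ∑ _ : κ, #B := by simp only [sum_const, card_univ, smul_eq_mul])
  exact ⟨c, hc⟩

/-- A colouring of the sets in `𝓕` together with an independent set of `G` inside the union of
each colour class. -/
structure IndepColoring (G : SimpleGraph V) (𝓕 : Finset (Finset V)) (κ : Type*) where
  color : Finset V → κ
  indep : κ → Finset V
  exists_mem : ∀ c, ∀ v ∈ indep c, ∃ D ∈ 𝓕, color D = c ∧ v ∈ D
  isIndepSet : ∀ c, G.IsIndepSet (indep c : Set V)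

namespace IndepColoring

/-- Gives the new set `A` the colour `c`, and the class of `c` the independent set `J`. -/
def extend [DecidableEq κ] (C : IndepColoring G (𝓕.erase A) κ) (hA : A ∈ 𝓕) (c : κ)
    {J : Finset V} (hJ : G.IsIndepSet (J : Set V)) (hJA : J ⊆ C.indep c ∪ A) :
    IndepColoring G 𝓕 κ where
  color := Function.update C.color A c
  indep := Function.update C.indep c J
  exists_mem := by
    have hold : ∀ c', ∀ v ∈ C.indep c', ∃ D ∈ 𝓕, Function.update C.color A c D = c' ∧ v ∈ D := by
      intro c' v hv
      obtain ⟨D, hD, hcD, hvD⟩ := C.exists_mem c' v hv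
      obtain ⟨hDA, hD𝓕⟩ := mem_erase.1 hD
      exact ⟨D, hD𝓕, by rwa [Function.update_of_ne hDA], hvD⟩
    rw [Function.forall_update_iff C.indep
      (p := fun c' I ↦ ∀ v ∈ I, ∃ D ∈ 𝓕, Function.update C.color A c D = c' ∧ v ∈ D)]
    refine ⟨fun v hv ↦ ?_, fun c' _ ↦ hold c'⟩
    obtain hv | hv := mem_union.1 (hJA hv)
    · exact hold c v hv
    · exact ⟨A, hA, Function.update_self .., hv⟩
  isIndepSet :=
    (Function.forall_update_iff C.indep fun _ (I : Finset V) ↦ G.IsIndepSet (I : Set V)).2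
      ⟨hJ, fun c' _ ↦ C.isIndepSet c'⟩

lemma sum_card_extend [Fintype κ] [DecidableEq κ] (C : IndepColoring G (𝓕.erase A) κ)
    (hA : A ∈ 𝓕) (c : κ) {J : Finset V} (hJ : G.IsIndepSet (J : Set V)) (hJA : J ⊆ C.indep c ∪ A) :
    ∑ c', #((C.extend hA c hJ hJA).indep c') + #(C.indep c) = ∑ c', #(C.indep c') + #J := by
  have hupdate : ∀ c', #((C.extend hA c hJ hJA).indep c') =
      Function.update (fun c' ↦ #(C.indep c')) c #J c' :=
    fun c' ↦ Function.apply_update (fun _ ↦ card) C.indep c J c'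
  simp only [hupdate, sum_update_of_mem (mem_univ c)]
  rw [← add_sum_erase univ _ (mem_univ c), sdiff_singleton_eq_erase]
  ring

lemma exists_extend [Fintype κ] [Nonempty κ] (C : IndepColoring G (𝓕.erase A) κ)
    (hA : A ∈ 𝓕) (hκ : 4 * q ≤ Fintype.card κ) (hlen : 4 * (t + 2) ≤ #A)
    (hdisj : (𝓕 : Set (Finset V)).PairwiseDisjoint id)
    (hM2 : ∀ D ∈ 𝓕, M2Free G (A ∪ D)) (hsparse : IsSparse G 𝓕 q A) :
    ∃ C' : IndepColoring G 𝓕 κ, ∑ c, #(C.indep c) + t ≤ ∑ c, #(C'.indep c) := by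
  classical
  obtain ⟨B, hBA, U, hAB, hU, hfew⟩ := hsparse
  obtain ⟨c, hc⟩ := exists_color_conflicts_le (G := G) (𝓕 := 𝓕.erase A) C.color hκ hU
    fun v hv ↦ (card_le_card (arcNeighbors_mono (sdiff_subset_sdiff (erase_subset A 𝓕)
      Subset.rfl))).trans (hfew v hv)
  have hclass : ∀ D ∈ {D ∈ 𝓕.erase A | C.color D = c}, D ≠ A ∧ D ∈ 𝓕 := fun D hD ↦
    mem_erase.1 (mem_filter.1 hD).1
  obtain ⟨J, hJ, hJindep, hJcard⟩ := exists_isIndepSet_extension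
    (𝓕 := {D ∈ 𝓕.erase A | C.color D = c}) U hBA (union_self A ▸ hM2 A hA)
    (fun D hD ↦ hdisj hA (hclass D hD).2 (hclass D hD).1.symm)
    (fun D hD ↦ hM2 D (hclass D hD).2) (C.isIndepSet c) fun v hv ↦ by
      obtain ⟨D, hD, hcD, hvD⟩ := C.exists_mem c v hv
      exact ⟨D, mem_filter.2 ⟨hD, hcD⟩, hvD⟩
  have hJA := hJ.trans (union_subset_union_right hBA)
  have hsum := C.sum_card_extend hA c hJindep hJA
  exact ⟨C.extend hA c hJindep hJA, by lia⟩

end IndepColoring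

theorem exists_indepColoring_of_sparse [Fintype κ] [Nonempty κ] {𝓐 : Finset (Finset V)}
    (hκ : 4 * q ≤ Fintype.card κ) (hlen : ∀ A ∈ 𝓐, 4 * (t + 2) ≤ #A)
    (hdisj : (𝓐 : Set (Finset V)).PairwiseDisjoint id)
    (hM2 : ∀ A ∈ 𝓐, ∀ D ∈ 𝓐, M2Free G (A ∪ D))
    (hsparse : ∀ 𝓑 ⊆ 𝓐, 𝓑.Nonempty → ∃ A ∈ 𝓑, IsSparse G 𝓑 q A) :
    ∃ C : IndepColoring G 𝓐 κ, #𝓐 * t ≤ ∑ c, #(C.indep c) := by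
  suffices ∀ 𝓕 ⊆ 𝓐, ∃ C : IndepColoring G 𝓕 κ, #𝓕 * t ≤ ∑ c, #(C.indep c) from this 𝓐 Subset.rfl
  intro 𝓕
  induction 𝓕 using Finset.strongInduction with
  | H 𝓕 ih =>
    intro h𝓕
    obtain rfl | hne := 𝓕.eq_empty_or_nonempty
    · exact ⟨⟨fun _ ↦ Classical.arbitrary κ, fun _ ↦ ∅, by simp, by simp⟩, by simp⟩
    obtain ⟨A, hA, hAsparse⟩ := hsparse 𝓕 h𝓕 hne
    obtain ⟨C, hC⟩ := ih (𝓕.erase A) (erase_ssubset hA) ((erase_subset A 𝓕).trans h𝓕)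
    obtain ⟨C', hC'⟩ := C.exists_extend hA hκ (hlen A (h𝓕 hA)) (hdisj.subset (coe_subset.2 h𝓕))
      (fun D hD ↦ hM2 A (h𝓕 hA) D (h𝓕 hD)) hAsparse
    refine ⟨C', ?_⟩
    calc #𝓕 * t = #(𝓕.erase A) * t + t := by rw [← card_erase_add_one hA, add_one_mul]
      _ ≤ ∑ c, #(C'.indep c) := (Nat.add_le_add_right hC t).trans hC'

theorem exists_isIndepSet_of_sparse {m : ℕ} {𝓐 : Finset (Finset V)}
    (hlen : ∀ A ∈ 𝓐, 4 * (t + 2) ≤ #A) (hdisj : (𝓐 : Set (Finset V)).PairwiseDisjoint id)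
    (hM2 : ∀ A ∈ 𝓐, ∀ D ∈ 𝓐, M2Free G (A ∪ D)) (hq : 0 < q) (hm : 4 * q * m < #𝓐 * t)
    (hsparse : ∀ 𝓑 ⊆ 𝓐, 𝓑.Nonempty → ∃ A ∈ 𝓑, IsSparse G 𝓑 q A) :
    ∃ I : Finset V, (∀ v ∈ I, ∃ A ∈ 𝓐, v ∈ A) ∧ G.IsIndepSet (I : Set V) ∧ m < #I := by
  have : Nonempty (Fin (4 * q)) := ⟨0, by lia⟩
  obtain ⟨C, hC⟩ := exists_indepColoring_of_sparse (κ := Fin (4 * q))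
    (Fintype.card_fin _).ge hlen hdisj hM2 hsparse
  obtain ⟨c, -, hc⟩ := exists_lt_of_sum_lt (s := univ) (f := fun _ ↦ m)
    (g := fun c ↦ #(C.indep c)) (by simpa using hm.trans_le hC)
  refine ⟨C.indep c, fun v hv ↦ ?_, C.isIndepSet c, hc⟩
  obtain ⟨D, hD, -, hvD⟩ := C.exists_mem c v hv
  exact ⟨D, hD, hvD⟩

end Coloring

section Quota

variable {p x : ℕ}

/-- The number `4·b_{p−1}·x^{(p−1)(p−2)/2}` of arcs assigned to each vertex of a good arc. -/
def goodQuota (p x : ℕ) : ℕ := 4 * bP (p - 1) * x ^ ((p - 1) * (p - 2) / 2)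

lemma bP_pos (p : ℕ) : 0 < bP p := by
  unfold bP
  positivity

lemma goodQuota_pos (hx : 0 < x) : 0 < goodQuota p x := by
  have := bP_pos (p - 1)
  unfold goodQuota
  positivity

lemma bP_succ (s : ℕ) : bP (s + 1) = 4 * bP s * (1000 * 16 ^ s) := by
  have h16 : (16 : ℕ) ^ s = 4 ^ (2 * s) := by rw [pow_mul]; norm_num
  rw [bP, bP, h16, show (s + 1) ^ 2 = s ^ 2 + 2 * s + 1 by ring]
  ring

lemma bP_mul_pow_eq (hp : 0 < p) :
    bP p * x ^ (p * (p - 1) / 2) = goodQuota p x * (1000 * 16 ^ (p - 1)) * x ^ (p - 1) := by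
  obtain ⟨s, rfl⟩ := Nat.exists_eq_add_one.2 hp
  rw [Nat.triangle_succ, pow_add, bP_succ, goodQuota, Nat.add_sub_cancel,
    show s + 1 - 2 = s - 1 by lia]
  ring

lemma four_mul_goodQuota_mul_pow_lt (hp : 0 < p) (hx : 0 < x) :
    4 * goodQuota p x * x ^ p < bP p * x ^ (p * (p - 1) / 2) * x := by
  have h16 : 0 < 16 ^ (p - 1) := by positivity
  have hpos := mul_pos (goodQuota_pos (p := p) hx) (pow_pos hx p)
  calc 4 * goodQuota p x * x ^ p = 4 * (goodQuota p x * x ^ p) := mul_assoc ..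
    _ < 1000 * 16 ^ (p - 1) * (goodQuota p x * x ^ p) := by gcongr; lia
    _ = bP p * x ^ (p * (p - 1) / 2) * x := by
      rw [bP_mul_pow_eq hp, ← pow_sub_one_mul hp.ne' x]
      ring

lemma one_lt_bP_mul_pow (hp : 0 < p) (hx : 0 < x) : 1 < bP p * x ^ (p * (p - 1) / 2) := by
  have hbP : 1 < bP p := one_lt_mul_of_lt_of_le (Nat.one_lt_pow hp.ne' (by norm_num))
    (Nat.one_le_pow _ _ four_pos)
  exact one_lt_mul_of_lt_of_le hbP (pow_pos hx _)

lemma four_mul_add_two_le_aP_mul (hp : 0 < p) (hx : 0 < x) : 4 * (x + 2) ≤ aP p * x := by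
  have h3 : 3 ≤ 3 ^ p := Nat.le_self_pow hp.ne' 3
  calc 4 * (x + 2) ≤ 10 * 3 * x := by lia
    _ ≤ aP p * x := by unfold aP; gcongr

end Quota

lemma goodArc_or_isSparse {V : Type} [Fintype V] [DecidableEq V] (G : SimpleGraph V)
    [DecidableRel G.Adj] (𝓕 : Finset (Finset V)) (p x : ℕ) (A : Finset V) :
    GoodArc G 𝓕 p x A ∨ IsSparse G 𝓕 (goodQuota p x) A := by
  refine (exists_isAllocation_or_isSparse G 𝓕 (goodQuota p x) A).imp_left ?_
  rintro ⟨S, hSA, hcard, F, hF⟩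
  exact ⟨S, F, hSA, hcard, fun v hv ↦
    ⟨fun D hD ↦ (mem_arcNeighbors.1 (hF.subset v hv hD)).1, hF.card_eq v hv,
      fun D hD ↦ (mem_arcNeighbors.1 (hF.subset v hv hD)).2⟩,
    fun u hu v hv huv ↦ hF.pairwiseDisjoint hu hv huv⟩

theorem statement11_general {V : Type} [Fintype V] [DecidableEq V] (G : SimpleGraph V)
    [DecidableRel G.Adj] {p x : ℕ} (hp : 0 < p) (hx : 0 < x) {𝓐 : Finset (Finset V)}
    (hdisj : (𝓐 : Set (Finset V)).PairwiseDisjoint id)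
    (hM2 : (𝓐 : Set (Finset V)).Pairwise fun A B ↦ M2Free G (A ∪ B))
    (hsize : bP p * x ^ (p * (p - 1) / 2) ≤ #𝓐) (hlen : ∀ A ∈ 𝓐, aP p * x ≤ #A) :
    (∃ I : Finset V, (∀ v ∈ I, ∃ A ∈ 𝓐, v ∈ A) ∧ G.IsIndepSet (I : Set V) ∧ x ^ p + 1 ≤ #I) ∨
      ∃ 𝓑 ⊆ 𝓐, 𝓑.Nonempty ∧ ∀ A ∈ 𝓑, GoodArc G 𝓑 p x A := by
  refine or_iff_not_imp_right.2 fun hgood ↦ ?_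
  push Not at hgood
  exact exists_isIndepSet_of_sparse
    (fun A hA ↦ (four_mul_add_two_le_aP_mul hp hx).trans (hlen A hA)) hdisj
    (m2Free_union_of_pairwise ((one_lt_bP_mul_pow hp hx).trans_le hsize) hM2) (goodQuota_pos hx)
    ((four_mul_goodQuota_mul_pow_lt hp hx).trans_le (Nat.mul_le_mul_right x hsize))
    fun 𝓑 h𝓑 hne ↦ (hgood 𝓑 h𝓑 hne).imp fun A ⟨hA, hbad⟩ ↦
      ⟨hA, (goodArc_or_isSparse G 𝓑 p x A).resolve_left hbad⟩

lemma ArcSystem.pairwiseDisjoint_arcs {V : Type} [Fintype V] [DecidableEq V] {G : SimpleGraph V}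
    [DecidableRel G.Adj] {n k : ℕ} {σ : ZMod n → V} {W : Finset V} (𝒜 : ArcSystem G n k σ W) :
    (𝒜.arcs : Set (Finset V)).PairwiseDisjoint id := fun A hA B hB hAB ↦
  (𝒜.closures_disjoint A hA B hB hAB).mono (𝒜.closure_spec A hA).2.1 (𝒜.closure_spec B hB).2.1

/-- There is a constant `c > 0` such that under Assumption (★) with
constant `c`: for every integer `p > 1` and positive integer `x`, every simple arc-system of
size `b_p·x^(p(p−1)/2)` and length `a_p·x` either yields an independent set of size
`x^p + 1` in `G[𝒜]`, or contains a non-empty subfamily `𝒜'` all of whose arcs are good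
in `𝒜'`. -/
theorem statement11 :
    ∃ c : ℝ, 0 < c ∧
      ∀ (V : Type) [Fintype V] [DecidableEq V] (G : SimpleGraph V) [DecidableRel G.Adj]
        (n k : ℕ) (σ : ZMod n → V) (W : Finset V),
        StarAssumption G n k σ W c →
        ∀ p x : ℕ, 1 < p → 0 < x →
          ∀ 𝒜 : ArcSystem G n k σ W,
            𝒜.Simple →
            𝒜.arcs.card = bP p * x ^ (p * (p - 1) / 2) →
            (∀ A ∈ 𝒜.arcs, aP p * x ≤ A.card) →
            (∃ A ∈ 𝒜.arcs, A.card = aP p * x) →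
            HasIndepInArcs G 𝒜 (x ^ p + 1) ∨
              ∃ arcs' ⊆ 𝒜.arcs, arcs'.Nonempty ∧
                ∀ A ∈ arcs', GoodArc G arcs' p x A :=
  ⟨1, one_pos, fun _ _ _ G _ _ _ _ _ _ _ _ hp hx 𝒜 h𝒜 hsize hlen _ ↦
    statement11_general G (zero_lt_one.trans hp) hx 𝒜.pairwiseDisjoint_arcs
      (fun A hA B hB ↦ h𝒜.2 A hA B hB) hsize.ge hlen⟩
end
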